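/- arXiv:1812.10582 — 10 statements merged into one kernel-verified Lean document; each statement's English description precedes it below -/
import Mathlib

section
/- Let v1, v2, v3 ∈ ℝ² be three non-collinear points, let σ > 0, let w_ij = exp(−‖v_i − v_j‖² / (2σ²)) for each pair, and let δ = min(w12, w13, w23). For each pair {i,j} ⊆ {1,2,3} let p_{ij} = (1/π)·∫₀^π P_{ij}(φ) dφ be the probability that the pair {i,j} survives the projected random cut. Then p12·w12 + p13·w13 + p23·w23 ≥ ((1+δ)/3)·max(w12, w13, w23). -/
open Real MeasureTheory

/-- Projection of a point of `ℝ²` onto the unit direction `(cos φ, sin φ)`. -/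
noncomputable def proj (v : EuclideanSpace ℝ (Fin 2)) (φ : ℝ) : ℝ :=
  v 0 * Real.cos φ + v 1 * Real.sin φ

/-- Probability that a uniformly random cut point in the projected range separates the point
projecting to `xm` from the pair projecting to `xi, xj`, i.e. that the pair `{i,j}` survives:
if `xm` is strictly smaller (or strictly larger) than both `xi` and `xj`, it is the distance
from `xm` to the nearest of `xi, xj` divided by the total range; otherwise it is `0`. -/
noncomputable def cutProb (xi xj xm : ℝ) : ℝ :=
  if (xm < xi ∧ xm < xj) ∨ (xi < xm ∧ xj < xm) then
    min |xm - xi| |xm - xj| / (max xi (max xj xm) - min xi (min xj xm))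
  else 0

/-- `p_{ij}`: the probability that the pair `{vi, vj}` (third point `vm`) survives the
projected random cut, averaged over a uniform projection angle `φ ∈ [0, π)`. -/
noncomputable def survProb (vi vj vm : EuclideanSpace ℝ (Fin 2)) : ℝ :=
  (1 / Real.pi) * ∫ φ in (0:ℝ)..Real.pi, cutProb (proj vi φ) (proj vj φ) (proj vm φ)

noncomputable def rng3 (a b c : ℝ) : ℝ := max |a - b| (max |a - c| |b - c|)

lemma rng3_pos (a b c : ℝ) (h : ¬ (a = b ∧ a = c)) : 0 < rng3 a b c := by
  unfold rng3
  by_cases h1 : a = b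
  · have : a - c ≠ 0 := fun h2 => h ⟨h1, by linarith⟩
    exact lt_of_lt_of_le (abs_pos.mpr this) (le_trans (le_max_left _ _) (le_max_right _ _))
  · exact lt_of_lt_of_le (abs_pos.mpr (sub_ne_zero.mpr h1)) (le_max_left _ _)

lemma rng3_swap (a b c : ℝ) : rng3 a c b = rng3 a b c := by
  unfold rng3
  rw [abs_sub_comm c b, max_left_comm]

lemma rng3_swap' (a b c : ℝ) : rng3 b a c = rng3 a b c := by
  unfold rng3
  rw [abs_sub_comm b a, max_comm |b - c|]

lemma rng3_eq (a b c : ℝ) : max a (max b c) - min a (min b c) = rng3 a b c := by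
  unfold rng3
  grind [abs_cases]

lemma cutProb_eq (a b c : ℝ) (h : ¬ (a = b ∧ a = c)) :
    cutProb a b c = 1 - |a - b| / rng3 a b c := by
  have hp := rng3_pos a b c h
  unfold cutProb
  rw [rng3_eq, eq_sub_iff_add_eq]
  have key : (if (c < a ∧ c < b) ∨ (a < c ∧ b < c) then min |c - a| |c - b| else 0) + |a - b|
      = rng3 a b c := by
    unfold rng3
    split_ifs with hc
    · rcases hc with ⟨h1, h2⟩ | ⟨h1, h2⟩
      · rw [abs_of_neg (by linarith : c - a < 0), abs_of_neg (by linarith : c - b < 0),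
          abs_of_pos (by linarith : 0 < a - c), abs_of_pos (by linarith : 0 < b - c)]
        rcases le_total a b with h3 | h3
        · rw [abs_of_nonpos (by linarith : a - b ≤ 0), min_eq_left (by linarith),
            max_eq_right (by linarith : a - c ≤ b - c), max_eq_right (by linarith)]; ring
        · rw [abs_of_nonneg (by linarith : 0 ≤ a - b), min_eq_right (by linarith),
            max_eq_left (by linarith : b - c ≤ a - c), max_eq_right (by linarith)]; ring
      · rw [abs_of_pos (by linarith : 0 < c - a), abs_of_pos (by linarith : 0 < c - b),
          abs_of_neg (by linarith : a - c < 0), abs_of_neg (by linarith : b - c < 0)]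
        rcases le_total a b with h3 | h3
        · rw [abs_of_nonpos (by linarith : a - b ≤ 0), min_eq_right (by linarith),
            max_eq_left (by linarith : -(b - c) ≤ -(a - c)), max_eq_right (by linarith)]; ring
        · rw [abs_of_nonneg (by linarith : 0 ≤ a - b), min_eq_left (by linarith),
            max_eq_right (by linarith : -(a - c) ≤ -(b - c)), max_eq_right (by linarith)]; ring
    · rw [zero_add]
      symm
      apply max_eq_left
      have h' : (a ≤ c ∨ b ≤ c) ∧ (c ≤ a ∨ c ≤ b) := by
        by_contra hh
        apply hc
        by_cases h1 : a ≤ c ∨ b ≤ c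
        · right
          have : ¬ (c ≤ a ∨ c ≤ b) := fun h2 => hh ⟨h1, h2⟩
          push Not at this
          exact this
        · left
          push Not at h1
          exact h1
      apply max_le <;> apply abs_le.mpr <;> rcases h' with ⟨h1 | h1, h2 | h2⟩ <;>
        rcases abs_cases (a - b) with ⟨h3, h4⟩ | ⟨h3, h4⟩ <;> constructor <;> linarith
  rw [← key] at hp ⊢
  split_ifs at hp ⊢ with hc <;> field_simp <;> ring

lemma cutProb_nonneg (a b c : ℝ) : 0 ≤ cutProb a b c := by
  unfold cutProb
  split_ifs
  · rw [rng3_eq]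
    apply div_nonneg
    · positivity
    · exact le_trans (abs_nonneg _) (le_max_left _ _)
  · exact le_rfl

lemma cutProb_sum (a b c : ℝ) (h : ¬ (a = b ∧ a = c)) :
    cutProb a b c + cutProb a c b + cutProb b c a = 1 := by
  have hp := rng3_pos a b c h
  rw [cutProb_eq a b c h, cutProb_eq a c b (fun h2 => h ⟨h2.2, h2.1⟩),
    cutProb_eq b c a (fun h2 => h ⟨h2.2.symm, h2.2.symm.trans h2.1⟩), rng3_swap a b c,
    rng3_swap b a c, rng3_swap' a b c]
  have key : |a - b| + |a - c| + |b - c| = 2 * rng3 a b c := by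
    rw [← rng3_eq]
    grind [abs_cases]
  field_simp
  linarith

lemma cutProb_comm (a b c : ℝ) : cutProb a b c = cutProb b a c := by
  unfold cutProb
  rw [rng3_eq, rng3_eq, rng3_swap' a b c, min_comm]
  simp only [and_comm]

lemma survProb_comm (a b c : EuclideanSpace ℝ (Fin 2)) : survProb a b c = survProb b a c := by
  unfold survProb
  simp only [cutProb_comm (proj a _)]

lemma survProb_nonneg (a b c : EuclideanSpace ℝ (Fin 2)) : 0 ≤ survProb a b c := by
  unfold survProb
  apply mul_nonneg (by positivity)
  exact intervalIntegral.integral_nonneg pi_pos.le (fun _ _ => cutProb_nonneg _ _ _)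

/-- Non-degeneracy: no direction projects all three points to one value. -/
def NonDeg (a b c : EuclideanSpace ℝ (Fin 2)) : Prop :=
  ∀ φ, ¬ (proj a φ = proj b φ ∧ proj a φ = proj c φ)

lemma NonDeg.swap {a b c : EuclideanSpace ℝ (Fin 2)} (h : NonDeg a b c) : NonDeg a c b :=
  fun φ h2 => h φ ⟨h2.2, h2.1⟩

lemma NonDeg.swap' {a b c : EuclideanSpace ℝ (Fin 2)} (h : NonDeg a b c) : NonDeg b a c :=
  fun φ h2 => h φ ⟨h2.1.symm, h2.1.symm.trans h2.2⟩

lemma cont_proj (a : EuclideanSpace ℝ (Fin 2)) : Continuous (proj a) := by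
  unfold proj
  fun_prop

lemma cont_cut {a b c : EuclideanSpace ℝ (Fin 2)} (h : NonDeg a b c) :
    Continuous (fun φ => cutProb (proj a φ) (proj b φ) (proj c φ)) := by
  have : (fun φ => cutProb (proj a φ) (proj b φ) (proj c φ)) =
      fun φ => 1 - |proj a φ - proj b φ| / rng3 (proj a φ) (proj b φ) (proj c φ) := by
    funext φ
    exact cutProb_eq _ _ _ (h φ)
  rw [this]
  have ha := cont_proj a
  have hb := cont_proj b
  have hc := cont_proj c
  refine continuous_const.sub (Continuous.div (by fun_prop) ?_ (fun φ => (rng3_pos _ _ _ (h φ)).ne'))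
  unfold rng3
  fun_prop

lemma surv_sum {a b c : EuclideanSpace ℝ (Fin 2)} (h : NonDeg a b c) :
    survProb a b c + survProb a c b + survProb b c a = 1 := by
  unfold survProb
  rw [← mul_add, ← mul_add, ← intervalIntegral.integral_add, ← intervalIntegral.integral_add]
  · simp only [cutProb_sum _ _ _ (h _)]
    simp [pi_pos.ne']
  · exact ((cont_cut h).add (cont_cut h.swap)).intervalIntegrable _ _
  · exact (cont_cut h.swap'.swap).intervalIntegrable _ _
  · exact (cont_cut h).intervalIntegrable _ _
  · exact (cont_cut h.swap).intervalIntegrable _ _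

/-- Range in terms of the projections of two edge vectors from a common vertex. -/
noncomputable def rngE (s t : ℝ) : ℝ := max |s| (max |t| |s - t|)

lemma rngE_opp {s t : ℝ} (h : s * t ≤ 0) : rngE s t = |s| + |t| := by
  unfold rngE
  have : |s - t| = |s| + |t| := by
    have := (abs_add_eq_add_abs_iff s (-t)).mpr (by
      rcases mul_nonpos_iff.mp h with h | h
      · left; constructor <;> linarith
      · right; constructor <;> linarith)
    rw [abs_neg] at this
    rw [sub_eq_add_neg, this]
  rw [this, max_eq_right (a := |t|), max_eq_right] <;> linarith [abs_nonneg s, abs_nonneg t]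

lemma rngE_same {s t : ℝ} (h : 0 ≤ s * t) : rngE s t = max |s| |t| := by
  unfold rngE
  have : |s - t| ≤ max |s| |t| := by
    rcases mul_nonneg_iff.mp h with ⟨h1, h2⟩ | ⟨h1, h2⟩
    · rw [abs_of_nonneg h1, abs_of_nonneg h2]
      rcases le_total s t with h3 | h3
      · rw [max_eq_right h3]; apply abs_le.mpr; constructor <;> linarith
      · rw [max_eq_left h3]; apply abs_le.mpr; constructor <;> linarith
    · rw [abs_of_nonpos h1, abs_of_nonpos h2]
      rcases le_total s t with h3 | h3
      · rw [max_eq_left (by linarith)]; apply abs_le.mpr; constructor <;> linarith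
      · rw [max_eq_right (by linarith)]; apply abs_le.mpr; constructor <;> linarith
  rw [← max_assoc, max_eq_left this]

lemma key_same (r R x y : ℝ) (hr : 0 < r) (hR : r ≤ R) (hy : 0 ≤ y) (hxy : y ≤ x) (hx : 0 < x) :
    0 ≤ (R * x - r * y) / max (r * y) (R * x) + (R * y - r * x) / max (r * x) (R * y) := by
  have hR0 : 0 < R := by linarith
  have h1 : r * y ≤ R * x := mul_le_mul hR hxy hy hR0.le
  rw [max_eq_right h1]
  have hRx : 0 < R * x := by positivity
  have hrx : 0 < r * x := by positivity
  rcases le_total (r * x) (R * y) with h2 | h2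
  · rw [max_eq_right h2]
    apply add_nonneg <;> apply div_nonneg <;> linarith
  · rw [max_eq_left h2, div_add_div _ _ hRx.ne' hrx.ne']
    apply div_nonneg _ (by positivity)
    have : (R * x - r * y) * (r * x) + R * x * (R * y - r * x) = x * y * (R - r) * (R + r) := by ring
    rw [this]
    have : 0 ≤ R - r := by linarith
    positivity

lemma key (r R p q : ℝ) (hr : 0 < r) (hR : r ≤ R) (h1 : 0 < rngE (r * q) (R * p)) :
    0 ≤ (|R * p| - |r * q|) / rngE (r * q) (R * p)
      + (|R * q| - |r * p|) / rngE (r * p) (R * q) := by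
  have hR0 : 0 < R := by linarith
  rcases le_total (p * q) 0 with h | h
  · have e1 : r * q * (R * p) ≤ 0 := by
      have : r * q * (R * p) = r * R * (p * q) := by ring
      rw [this]; exact mul_nonpos_of_nonneg_of_nonpos (by positivity) h
    have e2 : r * p * (R * q) ≤ 0 := by linarith [e1, (by ring : r * p * (R * q) = r * q * (R * p))]
    rw [rngE_opp e1] at h1 ⊢
    rw [rngE_opp e2]
    simp only [abs_mul, abs_of_pos hr, abs_of_pos hR0] at *
    have hx := abs_nonneg p
    have hy := abs_nonneg q
    generalize |p| = x at *
    generalize |q| = y at *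
    have h2 : 0 < r * x + R * y := by
      rcases hx.eq_or_lt with hx | hx
      · rcases hy.eq_or_lt with hy | hy
        · subst hx; subst hy; simp at h1
        · positivity
      · positivity
    rw [div_add_div _ _ h1.ne' h2.ne']
    apply div_nonneg _ (by positivity)
    have : (R * x - r * y) * (r * x + R * y) + (r * y + R * x) * (R * y - r * x)
      = 2 * x * y * (R - r) * (R + r) := by ring
    rw [this]
    have : 0 ≤ R - r := by linarith
    positivity
  · have e1 : 0 ≤ r * q * (R * p) := by
      have : r * q * (R * p) = r * R * (p * q) := by ring
      rw [this]; positivity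
    have e2 : 0 ≤ r * p * (R * q) := by linarith [e1, (by ring : r * p * (R * q) = r * q * (R * p))]
    rw [rngE_same e1] at h1 ⊢
    rw [rngE_same e2]
    simp only [abs_mul, abs_of_pos hr, abs_of_pos hR0] at *
    have hx := abs_nonneg p
    have hy := abs_nonneg q
    generalize |p| = x at *
    generalize |q| = y at *
    have h0 : 0 < x ∨ 0 < y := by
      by_contra hh
      push Not at hh
      have h3 : x = 0 := le_antisymm hh.1 hx
      have h4 : y = 0 := le_antisymm hh.2 hy
      subst h3; subst h4; simp at h1
    rcases le_total y x with h3 | h3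
    · exact key_same r R x y hr hR hy h3 (by rcases h0 with h0 | h0 <;> linarith)
    · rw [add_comm]
      exact key_same r R y x hr hR hx h3 (by rcases h0 with h0 | h0 <;> linarith)

lemma polar (x y : ℝ) : ∃ θ, ∀ φ,
    x * Real.cos φ + y * Real.sin φ = √(x ^ 2 + y ^ 2) * Real.cos (θ - φ) := by
  refine ⟨Complex.arg ⟨x, y⟩, fun φ => ?_⟩
  have hn : √(x ^ 2 + y ^ 2) = ‖(⟨x, y⟩ : ℂ)‖ := by
    rw [Complex.norm_def, Complex.normSq_mk, sq, sq]
  have h1 := Complex.norm_mul_cos_arg (⟨x, y⟩ : ℂ)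
  have h2 := Complex.norm_mul_sin_arg (⟨x, y⟩ : ℂ)
  rw [hn, Real.cos_sub, mul_add, ← mul_assoc, ← mul_assoc, h1, h2]

lemma surv_mono {a b c : EuclideanSpace ℝ (Fin 2)} (h : NonDeg a b c)
    (hl : ‖a - b‖ ≤ ‖a - c‖) : survProb a c b ≤ survProb a b c := by
  obtain ⟨θ, hθ⟩ := polar ((a - b) 0) ((a - b) 1)
  obtain ⟨ψ, hψ⟩ := polar ((a - c) 0) ((a - c) 1)
  have n1 : √((a - b) 0 ^ 2 + (a - b) 1 ^ 2) = ‖a - b‖ := by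
    rw [EuclideanSpace.norm_eq]; simp [Fin.sum_univ_two]
  have n2 : √((a - c) 0 ^ 2 + (a - c) 1 ^ 2) = ‖a - c‖ := by
    rw [EuclideanSpace.norm_eq]; simp [Fin.sum_univ_two]
  rw [n1] at hθ
  rw [n2] at hψ
  have hab : a ≠ b := by
    rintro rfl
    by_cases hz : ‖a - c‖ = 0
    · have : a = c := sub_eq_zero.mp (norm_eq_zero.mp hz)
      subst this
      exact h 0 ⟨rfl, rfl⟩
    · refine h (ψ - π / 2) ⟨rfl, ?_⟩
      have := hψ (ψ - π / 2)
      simp only [sub_sub_cancel, Real.cos_pi_div_two, mul_zero, PiLp.sub_apply] at this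
      unfold proj
      linarith
  have hr : 0 < ‖a - b‖ := norm_pos_iff.mpr (sub_ne_zero.mpr hab)
  set r := ‖a - b‖
  set R := ‖a - c‖
  have d1 : ∀ φ, proj a φ - proj b φ = r * Real.cos (θ - φ) := by
    intro φ; rw [← hθ]; unfold proj; simp only [PiLp.sub_apply]; ring
  have d2 : ∀ φ, proj a φ - proj c φ = R * Real.cos (ψ - φ) := by
    intro φ; rw [← hψ]; unfold proj; simp only [PiLp.sub_apply]; ring
  have hrng : ∀ φ, rng3 (proj a φ) (proj b φ) (proj c φ)
      = rngE (r * Real.cos (θ - φ)) (R * Real.cos (ψ - φ)) := by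
    intro φ
    unfold rng3 rngE
    rw [← d1, ← d2, sub_sub_sub_cancel_left, abs_sub_comm (proj c φ)]
  let F : ℝ → ℝ := fun φ => cutProb (proj a φ) (proj b φ) (proj c φ)
    - cutProb (proj a φ) (proj c φ) (proj b φ)
  have hF : ∀ φ, F φ = (|R * Real.cos (ψ - φ)| - |r * Real.cos (θ - φ)|)
      / rngE (r * Real.cos (θ - φ)) (R * Real.cos (ψ - φ)) := by
    intro φ
    simp only [F]
    rw [cutProb_eq _ _ _ (h φ), cutProb_eq _ _ _ (h.swap φ), rng3_swap (proj a φ) (proj b φ), hrng, d1, d2]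
    ring
  have hcont : Continuous F := (cont_cut h).sub (cont_cut h.swap)
  have hper : Function.Periodic F π := by
    intro φ
    rw [hF, hF]
    have e : ∀ t, Real.cos (t - (φ + π)) = - Real.cos (t - φ) := by
      intro t; rw [← sub_sub, Real.cos_sub_pi]
    unfold rngE
    simp only [e, mul_neg, abs_neg]
    rw [← neg_sub', abs_neg]
  have hrefl : ∫ φ in (0:ℝ)..π, F (θ + ψ - φ) = ∫ φ in (0:ℝ)..π, F φ := by
    rw [intervalIntegral.integral_comp_sub_left]
    have := hper.intervalIntegral_add_eq (θ + ψ - π) 0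
    simpa using this
  have hpt : ∀ φ, 0 ≤ F φ + F (θ + ψ - φ) := by
    intro φ
    rw [hF, hF]
    have e1 : Real.cos (ψ - (θ + ψ - φ)) = Real.cos (θ - φ) := by
      rw [← Real.cos_neg]; congr 1; ring
    have e2 : Real.cos (θ - (θ + ψ - φ)) = Real.cos (ψ - φ) := by
      rw [← Real.cos_neg]; congr 1; ring
    rw [e1, e2]
    apply key r R _ _ hr hl
    rw [← hrng]
    exact rng3_pos _ _ _ (h φ)
  have hI : 0 ≤ ∫ φ in (0:ℝ)..π, F φ := by
    have h0 : 0 ≤ ∫ φ in (0:ℝ)..π, (F φ + F (θ + ψ - φ)) :=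
      intervalIntegral.integral_nonneg pi_pos.le (fun φ _ => hpt φ)
    have hcont2 : Continuous (fun φ => F (θ + ψ - φ)) :=
      hcont.comp (by fun_prop)
    rw [intervalIntegral.integral_add (hcont.intervalIntegrable _ _)
      (hcont2.intervalIntegrable _ _), hrefl] at h0
    linarith
  rw [intervalIntegral.integral_sub ((cont_cut h).intervalIntegrable _ _)
    ((cont_cut h.swap).intervalIntegrable _ _)] at hI
  unfold survProb
  apply mul_le_mul_of_nonneg_left _ (by positivity)
  linarith

lemma surv_third {a b c : EuclideanSpace ℝ (Fin 2)} (h : NonDeg a b c)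
    (h1 : ‖a - b‖ ≤ ‖a - c‖) (h2 : ‖a - b‖ ≤ ‖b - c‖) : 1 / 3 ≤ survProb a b c := by
  have e1 := surv_mono h h1
  have e2 := surv_mono h.swap' (by rwa [norm_sub_rev b a])
  rw [survProb_comm b a c] at e2
  have := surv_sum h
  linarith

lemma nonDeg_of {a b c : EuclideanSpace ℝ (Fin 2)}
    (hcol : ¬ Collinear ℝ ({a, b, c} : Set (EuclideanSpace ℝ (Fin 2)))) : NonDeg a b c := by
  intro φ ⟨h1, h2⟩
  apply hcol
  rw [collinear_iff_of_mem (p₀ := a) (by simp)]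
  refine ⟨!₂[-Real.sin φ, Real.cos φ], ?_⟩
  have main : ∀ p : EuclideanSpace ℝ (Fin 2), proj a φ = proj p φ →
      ∃ r : ℝ, p = r • !₂[-Real.sin φ, Real.cos φ] +ᵥ a := by
    intro p hp
    unfold proj at hp
    refine ⟨(p 0 - a 0) * (-Real.sin φ) + (p 1 - a 1) * Real.cos φ, ?_⟩
    have hs := Real.sin_sq_add_cos_sq φ
    ext i
    fin_cases i
    · simp
      linear_combination (-(p 0 - a 0)) * hs - Real.cos φ * hp
    · simp
      linear_combination (-(p 1 - a 1)) * hs - Real.sin φ * hp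
  intro p hp
  simp only [Set.mem_insert_iff, Set.mem_singleton_iff] at hp
  rcases hp with rfl | rfl | rfl
  · exact main _ rfl
  · exact main _ h1
  · exact main _ h2

lemma final_alg (p q s w x y d : ℝ) (hp : 1 / 3 ≤ p) (hq : 0 ≤ q) (hs : 0 ≤ s)
    (hsum : p + q + s = 1) (hw : w ≤ 1) (hd : 0 < d) (hdw : d ≤ w) (hdx : d ≤ x) (hdy : d ≤ y) :
    (1 + d) / 3 * w ≤ p * w + q * x + s * y := by
  have h1 := mul_le_mul_of_nonneg_left hdx hq
  have h2 := mul_le_mul_of_nonneg_left hdy hs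
  have h3 : 0 ≤ (p - 1 / 3) * (w - d) := mul_nonneg (by linarith) (by linarith)
  have h4 : d * w ≤ d := by nlinarith
  have h5 : q * d + s * d = (1 - p) * d := by rw [← hsum]; ring
  nlinarith

theorem stmt0 (v1 v2 v3 : EuclideanSpace ℝ (Fin 2))
    (hcol : ¬ Collinear ℝ ({v1, v2, v3} : Set (EuclideanSpace ℝ (Fin 2))))
    (σ : ℝ) (hσ : 0 < σ)
    (w12 w13 w23 δ : ℝ)
    (hw12 : w12 = Real.exp (-‖v1 - v2‖ ^ 2 / (2 * σ ^ 2)))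
    (hw13 : w13 = Real.exp (-‖v1 - v3‖ ^ 2 / (2 * σ ^ 2)))
    (hw23 : w23 = Real.exp (-‖v2 - v3‖ ^ 2 / (2 * σ ^ 2)))
    (hδ : δ = min w12 (min w13 w23)) :
    survProb v1 v2 v3 * w12 + survProb v1 v3 v2 * w13 + survProb v2 v3 v1 * w23
      ≥ ((1 + δ) / 3) * max w12 (max w13 w23) := by
  have hN := nonDeg_of hcol
  have mono : ∀ s t : ℝ, 0 ≤ s → s ≤ t →
      Real.exp (-t ^ 2 / (2 * σ ^ 2)) ≤ Real.exp (-s ^ 2 / (2 * σ ^ 2)) := by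
    intro s t hs hst
    apply Real.exp_le_exp.mpr
    have : s ^ 2 ≤ t ^ 2 := pow_le_pow_left₀ hs hst 2
    gcongr
  have le1 : ∀ s : ℝ, Real.exp (-s ^ 2 / (2 * σ ^ 2)) ≤ 1 := by
    intro s
    apply Real.exp_le_one_iff.mpr
    apply div_nonpos_of_nonpos_of_nonneg
    · linarith [sq_nonneg s]
    · positivity
  have hd0 : 0 < δ := by rw [hδ, hw12, hw13, hw23]; positivity
  have d1 : δ ≤ w12 := hδ ▸ min_le_left _ _
  have d2 : δ ≤ w13 := hδ ▸ le_trans (min_le_right _ _) (min_le_left _ _)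
  have d3 : δ ≤ w23 := hδ ▸ le_trans (min_le_right _ _) (min_le_right _ _)
  have l1 : w12 ≤ 1 := hw12 ▸ le1 _
  have l2 : w13 ≤ 1 := hw13 ▸ le1 _
  have l3 : w23 ≤ 1 := hw23 ▸ le1 _
  have hsum := surv_sum hN
  have p1 := survProb_nonneg v1 v2 v3
  have p2 := survProb_nonneg v1 v3 v2
  have p3 := survProb_nonneg v2 v3 v1
  have n1 := norm_nonneg (v1 - v2)
  have n2 := norm_nonneg (v1 - v3)
  have n3 := norm_nonneg (v2 - v3)
  have c1 : ‖v1 - v2‖ ≤ ‖v1 - v3‖ → ‖v1 - v2‖ ≤ ‖v2 - v3‖ →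
      survProb v1 v2 v3 * w12 + survProb v1 v3 v2 * w13 + survProb v2 v3 v1 * w23
      ≥ ((1 + δ) / 3) * max w12 (max w13 w23) := by
    intro ha hb
    rw [max_eq_left (max_le (by rw [hw12, hw13]; exact mono _ _ n1 ha)
      (by rw [hw12, hw23]; exact mono _ _ n1 hb))]
    exact final_alg _ _ _ _ _ _ _ (surv_third hN ha hb) p2 p3 hsum l1 hd0 d1 d2 d3
  have c2 : ‖v1 - v3‖ ≤ ‖v1 - v2‖ → ‖v1 - v3‖ ≤ ‖v2 - v3‖ →
      survProb v1 v2 v3 * w12 + survProb v1 v3 v2 * w13 + survProb v2 v3 v1 * w23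
      ≥ ((1 + δ) / 3) * max w12 (max w13 w23) := by
    intro ha hb
    rw [max_left_comm, max_eq_left (max_le (by rw [hw12, hw13]; exact mono _ _ n2 ha)
      (by rw [hw13, hw23]; exact mono _ _ n2 hb))]
    have := final_alg _ _ _ _ _ _ _ (surv_third hN.swap ha (by rwa [norm_sub_rev v3 v2])) p1 p3
      (by linarith) l2 hd0 d2 d1 d3
    linarith
  have c3 : ‖v2 - v3‖ ≤ ‖v1 - v2‖ → ‖v2 - v3‖ ≤ ‖v1 - v3‖ →
      survProb v1 v2 v3 * w12 + survProb v1 v3 v2 * w13 + survProb v2 v3 v1 * w23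
      ≥ ((1 + δ) / 3) * max w12 (max w13 w23) := by
    intro ha hb
    rw [← max_assoc, max_eq_right (max_le (by rw [hw12, hw23]; exact mono _ _ n3 ha)
      (by rw [hw13, hw23]; exact mono _ _ n3 hb))]
    have := final_alg _ _ _ _ _ _ _ (surv_third hN.swap'.swap (by rwa [norm_sub_rev v2 v1])
      (by rwa [norm_sub_rev v3 v1])) p1 p2 (by linarith) l3 hd0 d3 d1 d2
    linarith
  rcases le_total ‖v1 - v2‖ ‖v1 - v3‖ with ha | ha
  · rcases le_total ‖v1 - v2‖ ‖v2 - v3‖ with hb | hb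
    · exact c1 ha hb
    · exact c3 hb (hb.trans ha)
  · rcases le_total ‖v1 - v3‖ ‖v2 - v3‖ with hb | hb
    · exact c2 ha hb
    · exact c3 (hb.trans ha) hb
end

section
/- Let v1, v2, v3 ∈ ℝ² be three non-collinear points with ‖v1 − v3‖ ≤ ‖v2 − v3‖ ≤ ‖v1 − v2‖ (so (v1, v3) is a shortest side of the triangle). Then p13 = (1/π)·∫₀^π P_{13}(φ) dφ ≥ 1/3. -/
open Real MeasureTheory

lemma cutProb_comm_s1 (x y z : ℝ) : cutProb x y z = cutProb y x z := by
  unfold cutProb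
  rw [min_comm |z - x|, max_left_comm, min_left_comm x]
  congr 1
  rw [and_comm, and_comm (a := x < z)]

lemma cutProb_sub (x y z : ℝ) : cutProb x y z = cutProb (x - y) 0 (z - y) := by
  unfold cutProb
  have e1 : max (x - y) (max 0 (z - y)) = max x (max y z) - y := by
    rw [← max_sub_sub_right, ← max_sub_sub_right, sub_self]
  have e2 : min (x - y) (min 0 (z - y)) = min x (min y z) - y := by
    rw [← min_sub_sub_right, ← min_sub_sub_right, sub_self]
  rw [e1, e2]
  simp

lemma cutProb_diff (x y : ℝ) :
    cutProb x 0 y - cutProb y 0 x = (|y| - |x|) / max (max |x| |y|) |x - y| := by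
  unfold cutProb
  rcases lt_trichotomy x 0 with hx | hx | hx <;> rcases lt_trichotomy y 0 with hy | hy | hy <;>
  rcases lt_trichotomy x y with hxy | hxy | hxy <;> first
  | (exfalso; linarith)
  | (subst_vars; simp [*]; done)
  | (have h1 := abs_cases x
     have h2 := abs_cases y
     have h3 := abs_cases (x - y)
     have h4 := abs_cases (y - x)
     have e1 : max x (max 0 y) - min x (min 0 y) = max (max |x| |y|) |x - y| := by
       grind
     have e2 : max y (max 0 x) - min y (min 0 x) = max (max |x| |y|) |x - y| := by
       grind
     rw [e1, e2]
     split_ifs <;> first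
     | (exfalso; grind)
     | (rw [← sub_div]; congr 1; grind)
     | (rw [sub_zero]; congr 1; grind)
     | (rw [zero_sub, ← neg_div]; congr 1; grind)
     | grind)

lemma cutProb_sum_s1 (x y z : ℝ) (h : ¬ (x = y ∧ y = z)) :
    cutProb x y z + cutProb x z y + cutProb y z x = 1 := by
  have hR : 0 < max x (max y z) - min x (min y z) := by grind
  have e1 : max x (max z y) - min x (min z y) = max x (max y z) - min x (min y z) := by grind
  have e2 : max y (max z x) - min y (min z x) = max x (max y z) - min x (min y z) := by grind
  unfold cutProb
  rw [e1, e2]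
  have a1 := abs_cases (x - y)
  have a2 := abs_cases (y - z)
  have a3 := abs_cases (x - z)
  have b1 := abs_sub_comm x y
  have b2 := abs_sub_comm y z
  have b3 := abs_sub_comm x z
  have hR' := hR.ne'
  split_ifs <;> first
  | (exfalso; grind)
  | (simp only [zero_add, add_zero, ← add_div]; rw [div_eq_one_iff_eq hR']; grind)

lemma cutProb_bounds (x y z : ℝ) : |cutProb x y z| ≤ 1 := by
  unfold cutProb
  split_ifs with h
  · have hR : 0 < max x (max y z) - min x (min y z) := by grind
    rw [abs_of_nonneg (by positivity), div_le_one hR]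
    have a2 := abs_cases (z - y)
    have a3 := abs_cases (z - x)
    grind
  · simp

lemma d1 (a b : ℝ) (h : 0 ≤ a * b) : max (max |a| |b|) |a - b| = max |a| |b| := by
  apply max_eq_left
  rw [le_max_iff]
  rcases mul_nonneg_iff.1 h with ⟨h1, h2⟩ | ⟨h1, h2⟩
  · rw [abs_of_nonneg h1, abs_of_nonneg h2]
    rcases abs_cases (a - b) with h3 | h3
    · left; linarith
    · right; linarith
  · rw [abs_of_nonpos h1, abs_of_nonpos h2]
    rcases abs_cases (a - b) with h3 | h3
    · right; linarith
    · left; linarith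

lemma d2 (a b : ℝ) (h : a * b ≤ 0) : max (max |a| |b|) |a - b| = |b| + |a| := by
  have h3 : |a - b| = |b| + |a| := by
    rcases mul_nonpos_iff.1 h with ⟨h1, h2⟩ | ⟨h1, h2⟩
    · rw [abs_of_nonneg h1, abs_of_nonpos h2, abs_of_nonneg (by linarith)]; ring
    · rw [abs_of_nonpos h1, abs_of_nonneg h2, abs_of_nonpos (by linarith)]; ring
  rw [h3]
  apply max_eq_right
  have := abs_nonneg a
  have := abs_nonneg b
  apply max_le <;> linarith

lemma key_ineq (m n s t : ℝ) (hm : 0 < m) (hmn : m ≤ n) :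
    0 ≤ (|n * t| - |m * s|) / max (max |m * s| |n * t|) |m * s - n * t|
      + (|n * s| - |m * t|) / max (max |m * t| |n * s|) |m * t - n * s| := by
  have hn : 0 < n := hm.trans_le hmn
  by_cases hs : s = 0
  · subst hs
    by_cases ht : t = 0
    · subst ht; simp
    · have h1 : |n * t| ≠ 0 := by positivity
      have h2 : |m * t| ≠ 0 := by positivity
      simp only [mul_zero, abs_zero, sub_zero, zero_sub, abs_neg, max_self,
        max_eq_left (abs_nonneg (_ : ℝ)),
        max_eq_right (abs_nonneg (_ : ℝ))]
      rw [div_self h1, neg_div, div_self h2]; simp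
  by_cases ht : t = 0
  · subst ht
    have h1 : |n * s| ≠ 0 := by positivity
    have h2 : |m * s| ≠ 0 := by positivity
    simp only [mul_zero, abs_zero, sub_zero, zero_sub, abs_neg, max_self,
        max_eq_left (abs_nonneg (_ : ℝ)),
        max_eq_right (abs_nonneg (_ : ℝ))]
    rw [div_self h1, neg_div, div_self h2]; simp
  -- opposite-sign and same-sign model cases
  have opp : ∀ S T : ℝ, 0 < S → 0 < T →
      0 ≤ (n * T - m * S) / (n * T + m * S) + (n * S - m * T) / (n * S + m * T) := by
    intro S T hS hT
    rw [div_add_div _ _ (by positivity) (by positivity)]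
    apply div_nonneg _ (by positivity)
    have : (n * T - m * S) * (n * S + m * T) + (n * T + m * S) * (n * S - m * T)
      = 2 * (S * T) * ((n - m) * (n + m)) := by ring
    rw [this]
    have := sub_nonneg.2 hmn
    positivity
  have same0 : ∀ S T : ℝ, 0 < S → 0 < T → S ≤ T →
      0 ≤ (n * T - m * S) / max (m * S) (n * T) + (n * S - m * T) / max (m * T) (n * S) := by
    intro S T hS hT hST
    have h1 : m * S ≤ n * T := by gcongr
    rw [max_eq_right h1]
    have h3 : 0 ≤ (n * T - m * S) / (n * T) := div_nonneg (by linarith) (by positivity)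
    rcases le_total (m * T) (n * S) with h2 | h2
    · rw [max_eq_right h2]
      have h4 : 0 ≤ (n * S - m * T) / (n * S) := div_nonneg (by linarith) (by positivity)
      linarith
    · rw [max_eq_left h2]
      rw [sub_div, sub_div, div_self (by positivity), div_self (by positivity)]
      have : m * S / (n * T) ≤ n * S / (m * T) := by gcongr
      linarith
  have same : ∀ S T : ℝ, 0 < S → 0 < T →
      0 ≤ (n * T - m * S) / max (m * S) (n * T) + (n * S - m * T) / max (m * T) (n * S) := by
    intro S T hS hT
    rcases le_total S T with h | h
    · exact same0 S T hS hT h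
    · rw [add_comm]; exact same0 T S hT hS h
  have hS : 0 < |s| := abs_pos.2 hs
  have hT : 0 < |t| := abs_pos.2 ht
  have ab : ∀ a b : ℝ, 0 < a → |a * b| = a * |b| := fun a b h => by
    rw [abs_mul, abs_of_pos h]
  have hmn' : 0 < m * n := by positivity
  rcases le_total 0 (s * t) with h | h
  · rw [d1 (m * s) (n * t) (by nlinarith), d1 (m * t) (n * s) (by nlinarith)]
    simp only [ab _ _ hm, ab _ _ hn]
    exact same _ _ hS hT
  · rw [d2 (m * s) (n * t) (by nlinarith), d2 (m * t) (n * s) (by nlinarith)]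
    simp only [ab _ _ hm, ab _ _ hn]
    exact opp _ _ hS hT

abbrev E2 := EuclideanSpace ℝ (Fin 2)

lemma cut_integrable (a b c : E2) (x y : ℝ) :
    IntervalIntegrable (fun φ => cutProb (proj a φ) (proj b φ) (proj c φ)) volume x y := by
  have hp : ∀ v : E2, Measurable (proj v) := by
    intro v; unfold proj; fun_prop
  have h1 := hp a
  have h2 := hp b
  have h3 := hp c
  have hmeas : Measurable (fun φ => cutProb (proj a φ) (proj b φ) (proj c φ)) := by
    unfold cutProb
    apply Measurable.ite
    · exact ((measurableSet_lt h3 h1).inter (measurableSet_lt h3 h2)).union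
        ((measurableSet_lt h1 h3).inter (measurableSet_lt h2 h3))
    · fun_prop
    · exact measurable_const
  apply (intervalIntegrable_const (c := (1:ℝ))).mono_fun hmeas.aestronglyMeasurable
  filter_upwards with φ
  simpa using cutProb_bounds _ _ _

lemma cutProb_neg (x y z : ℝ) : cutProb (-x) (-y) (-z) = cutProb x y z := by
  unfold cutProb
  have e : max (-x) (max (-y) (-z)) - min (-x) (min (-y) (-z))
      = max x (max y z) - min x (min y z) := by
    rw [max_neg_neg, max_neg_neg, min_neg_neg, min_neg_neg]; ring
  rw [e, show -z - -x = -(z - x) by ring, show -z - -y = -(z - y) by ring, abs_neg, abs_neg]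
  congr 1
  simp only [neg_lt_neg_iff]
  rw [or_comm]

lemma proj_pi (v : E2) (φ : ℝ) : proj v (φ + π) = - proj v φ := by
  simp [proj]; ring

lemma polar_s1 (v : E2) : ∃ a : ℝ, ∀ φ, proj v φ = ‖v‖ * Real.cos (φ - a) := by
  refine ⟨Complex.arg ⟨v 0, v 1⟩, fun φ => ?_⟩
  have hn : ‖(⟨v 0, v 1⟩ : ℂ)‖ = ‖v‖ := by
    rw [EuclideanSpace.norm_eq, Complex.norm_eq_sqrt_sq_add_sq]
    simp [Fin.sum_univ_two]
  have h1 := Complex.norm_mul_cos_arg ⟨v 0, v 1⟩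
  have h2 := Complex.norm_mul_sin_arg ⟨v 0, v 1⟩
  rw [hn] at h1 h2
  simp only at h1 h2
  rw [Real.cos_sub, proj]
  linear_combination (-Real.cos φ) * h1 - Real.sin φ * h2

lemma proj_sub (v w : E2) (φ : ℝ) : proj (v - w) φ = proj v φ - proj w φ := by
  simp [proj]; ring

/-- The pair at smaller distance survives with at least the probability of the other one. -/
lemma integral_cmp (v1 v2 v3 : E2) (hne : v1 ≠ v3) (h : ‖v1 - v3‖ ≤ ‖v2 - v3‖) :
    ∫ φ in (0:ℝ)..π, cutProb (proj v2 φ) (proj v3 φ) (proj v1 φ) ≤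
    ∫ φ in (0:ℝ)..π, cutProb (proj v1 φ) (proj v3 φ) (proj v2 φ) := by
  obtain ⟨a, ha⟩ := polar_s1 (v1 - v3)
  obtain ⟨b, hb⟩ := polar_s1 (v2 - v3)
  set F : ℝ → ℝ := fun φ => cutProb (proj v1 φ) (proj v3 φ) (proj v2 φ)
    - cutProb (proj v2 φ) (proj v3 φ) (proj v1 φ) with hF
  have hFi : ∀ x y, IntervalIntegrable F volume x y := fun x y =>
    (cut_integrable v1 v3 v2 x y).sub (cut_integrable v2 v3 v1 x y)
  have hper : Function.Periodic F π := by
    intro φ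
    simp only [hF, proj_pi, cutProb_neg]
  have hrefl : ∫ φ in (0:ℝ)..π, F (a + b - φ) = ∫ φ in (0:ℝ)..π, F φ := by
    rw [intervalIntegral.integral_comp_sub_left]
    have := hper.intervalIntegral_add_eq (a + b - π) 0
    simpa using this
  have hpos : ∀ φ, 0 ≤ F φ + F (a + b - φ) := by
    intro φ
    have hm : 0 < ‖v1 - v3‖ := norm_pos_iff.2 (sub_ne_zero.2 hne)
    have := key_ineq ‖v1 - v3‖ ‖v2 - v3‖ (Real.cos (φ - a)) (Real.cos (φ - b)) hm h
    have c1 : Real.cos (a + b - φ - a) = Real.cos (φ - b) := by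
      rw [← Real.cos_neg]; congr 1; ring
    have c2 : Real.cos (a + b - φ - b) = Real.cos (φ - a) := by
      rw [← Real.cos_neg]; congr 1; ring
    simp only [hF]
    rw [cutProb_sub (proj v1 φ), cutProb_sub (proj v2 φ), cutProb_sub (proj v1 (a + b - φ)),
      cutProb_sub (proj v2 (a + b - φ)), cutProb_diff, cutProb_diff]
    simp only [← proj_sub, ha, hb, c1, c2]
    exact this
  have hsum : 0 ≤ ∫ φ in (0:ℝ)..π, (F φ + F (a + b - φ)) :=
    intervalIntegral.integral_nonneg Real.pi_pos.le (fun φ _ => hpos φ)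
  have hi2 : IntervalIntegrable (fun φ => F (a + b - φ)) volume 0 π := by
    have := (hFi (a + b - 0) (a + b - π)).comp_sub_left (a + b)
    simpa using this
  rw [intervalIntegral.integral_add (hFi _ _) hi2, hrefl] at hsum
  have hd : ∫ φ in (0:ℝ)..π, F φ = _ :=
    intervalIntegral.integral_sub (cut_integrable v1 v3 v2 0 π) (cut_integrable v2 v3 v1 0 π)
  linarith

lemma not_all_eq (v1 v2 v3 : E2) (hcol : ¬ Collinear ℝ ({v1, v2, v3} : Set E2)) (φ : ℝ) :
    ¬ (proj v1 φ = proj v2 φ ∧ proj v2 φ = proj v3 φ) := by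
  rintro ⟨h1, h2⟩
  apply hcol
  have key : ∀ v : E2, proj v φ = proj v1 φ → ∃ r : ℝ,
      v = r • (!₂[-Real.sin φ, Real.cos φ] : E2) +ᵥ v1 := by
    intro v hv
    have hs := Real.sin_sq_add_cos_sq φ
    unfold proj at hv
    refine ⟨-(v 0 - v1 0) * Real.sin φ + (v 1 - v1 1) * Real.cos φ, ?_⟩
    ext i
    fin_cases i
    · simp
      linear_combination (- (v 0 - v1 0)) * hs + Real.cos φ * hv
    · simp
      linear_combination (- (v 1 - v1 1)) * hs + Real.sin φ * hv
  rw [collinear_iff_of_mem (p₀ := v1) (by simp)]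
  refine ⟨!₂[-Real.sin φ, Real.cos φ], ?_⟩
  intro p hp
  simp only [Set.mem_insert_iff, Set.mem_singleton_iff] at hp
  rcases hp with rfl | rfl | rfl
  · exact key _ rfl
  · exact key _ h1.symm
  · exact key _ (by rw [h1, h2])

theorem stmt1 (v1 v2 v3 : EuclideanSpace ℝ (Fin 2))
    (hcol : ¬ Collinear ℝ ({v1, v2, v3} : Set (EuclideanSpace ℝ (Fin 2))))
    (h13 : ‖v1 - v3‖ ≤ ‖v2 - v3‖) (h23 : ‖v2 - v3‖ ≤ ‖v1 - v2‖) :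
    survProb v1 v3 v2 ≥ 1 / 3 := by
  have hne : v1 ≠ v3 := by
    rintro rfl
    apply hcol
    have : ({v1, v2, v1} : Set E2) = {v1, v2} := by
      ext; simp; tauto
    rw [this]
    exact collinear_pair ℝ v1 v2
  have c1 := integral_cmp v1 v2 v3 hne h13
  have c2 := integral_cmp v3 v2 v1 hne.symm (by
    rw [norm_sub_rev v3 v1, norm_sub_rev v2 v1]; exact h13.trans h23)
  have e3 : ∫ φ in (0:ℝ)..π, cutProb (proj v3 φ) (proj v1 φ) (proj v2 φ)
      = ∫ φ in (0:ℝ)..π, cutProb (proj v1 φ) (proj v3 φ) (proj v2 φ) := by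
    congr 1; ext φ; exact cutProb_comm_s1 _ _ _
  have e2 : ∫ φ in (0:ℝ)..π, cutProb (proj v2 φ) (proj v1 φ) (proj v3 φ)
      = ∫ φ in (0:ℝ)..π, cutProb (proj v1 φ) (proj v2 φ) (proj v3 φ) := by
    congr 1; ext φ; exact cutProb_comm_s1 _ _ _
  have hs : ∫ φ in (0:ℝ)..π, (cutProb (proj v1 φ) (proj v2 φ) (proj v3 φ)
      + cutProb (proj v1 φ) (proj v3 φ) (proj v2 φ)
      + cutProb (proj v2 φ) (proj v3 φ) (proj v1 φ)) = π := by
    have : ∀ φ : ℝ, cutProb (proj v1 φ) (proj v2 φ) (proj v3 φ)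
      + cutProb (proj v1 φ) (proj v3 φ) (proj v2 φ)
      + cutProb (proj v2 φ) (proj v3 φ) (proj v1 φ) = 1 := fun φ =>
      cutProb_sum_s1 _ _ _ (not_all_eq v1 v2 v3 hcol φ)
    simp [this]
  rw [intervalIntegral.integral_add
    ((cut_integrable _ _ _ _ _).add (cut_integrable _ _ _ _ _)) (cut_integrable _ _ _ _ _),
    intervalIntegral.integral_add (cut_integrable _ _ _ _ _) (cut_integrable _ _ _ _ _)] at hs
  rw [e3, e2] at c2
  unfold survProb
  rw [ge_iff_le, one_div_mul_eq_div, div_le_div_iff₀ (by norm_num) Real.pi_pos]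
  linarith
end

section
/- Let v1, v2, v3 ∈ ℝ² be three non-collinear points with ‖v1 − v3‖ ≤ ‖v2 − v3‖ ≤ ‖v1 − v2‖, and let θ₃ be the angle of the triangle at vertex v2, i.e. the angle between v1 − v2 and v3 − v2. Then p13 = (1/π)·∫₀^π P_{13}(φ) dφ ≥ (π − θ₃)/(2π). -/
open Real MeasureTheory

lemma cp_shift (m x y : ℝ) : cutProb (m + x) (m + y) m = cutProb x y 0 := by
  unfold cutProb
  have h1 : max (m + x) (max (m + y) m) = m + max x (max y 0) := by
    conv_lhs => rw [show max (m + y) m = m + max y 0 by rw [← max_add_add_left]; simp]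
    rw [max_add_add_left]
  have h2 : min (m + x) (min (m + y) m) = m + min x (min y 0) := by
    conv_lhs => rw [show min (m + y) m = m + min y 0 by rw [← min_add_add_left]; simp]
    rw [min_add_add_left]
  rw [h1, h2]
  simp

lemma cp_comm (x y m : ℝ) : cutProb x y m = cutProb y x m := by
  unfold cutProb
  rw [min_comm |m - x|, max_left_comm, min_left_comm x]
  simp only [and_comm]

lemma cp_neg (x y : ℝ) : cutProb (-x) (-y) 0 = cutProb x y 0 := by
  unfold cutProb
  have h1 : max (-x) (max (-y) 0) = - min x (min y 0) := by
    rw [← max_neg_neg, ← max_neg_neg]; simp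
  have h2 : min (-x) (min (-y) 0) = - max x (max y 0) := by
    rw [← min_neg_neg, ← min_neg_neg]; simp
  rw [h1, h2]
  simp only [zero_sub, neg_neg, abs_neg, Left.neg_pos_iff, Left.neg_neg_iff, neg_sub_neg, or_comm]

lemma cp_nonneg (x y m : ℝ) : 0 ≤ cutProb x y m := by
  unfold cutProb
  split_ifs
  · apply div_nonneg
    · positivity
    · have := min_le_left x (min y m)
      have := le_max_left x (max y m)
      linarith
  · exact le_rfl

lemma cp_le_one (x y m : ℝ) : cutProb x y m ≤ 1 := by
  unfold cutProb
  split_ifs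
  · apply div_le_one_of_le₀
    · refine (min_le_left _ _).trans ?_
      have h1 := min_le_left x (min y m)
      have h2 := le_max_left x (max y m)
      have h3 : min x (min y m) ≤ m := (min_le_right _ _).trans (min_le_right _ _)
      have h4 : m ≤ max x (max y m) := (le_max_right _ _).trans' (le_max_right _ _)
      rw [abs_le]; constructor <;> linarith
    · have := min_le_left x (min y m)
      have := le_max_left x (max y m)
      linarith
  · exact zero_le_one

lemma cp_eq {x y : ℝ} (hy : 0 < y) (hyx : y ≤ x) : cutProb x y 0 = y / x := by
  have hx : 0 < x := hy.trans_le hyx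
  unfold cutProb
  rw [if_pos (Or.inl ⟨hx, hy⟩)]
  simp only [zero_sub, abs_neg, abs_of_pos hx, abs_of_pos hy, min_eq_right hyx,
    max_eq_left hy.le, max_eq_left hyx, min_eq_right hy.le, min_eq_right hx.le, sub_zero]

lemma cp_int (x y : ℝ → ℝ) (hx : Continuous x) (hy : Continuous y) (p q : ℝ) :
    IntervalIntegrable (fun t => cutProb (x t) (y t) 0) volume p q := by
  have hm : Measurable (fun t => cutProb (x t) (y t) 0) := by
    unfold cutProb
    have hx := hx.measurable
    have hy := hy.measurable
    apply Measurable.ite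
    · exact ((measurableSet_lt measurable_const hx).inter (measurableSet_lt measurable_const hy)).union
        ((measurableSet_lt hx measurable_const).inter (measurableSet_lt hy measurable_const))
    · apply Measurable.div
      · exact ((measurable_const.sub hx).abs).min ((measurable_const.sub hy).abs)
      · exact (hx.max (hy.max measurable_const)).sub (hx.min (hy.min measurable_const))
    · exact measurable_const
  refine (intervalIntegrable_const (c := (1:ℝ))).mono_fun hm.aestronglyMeasurable ?_
  refine Filter.Eventually.of_forall fun t => ?_
  simp only [Real.norm_eq_abs, abs_of_nonneg (cp_nonneg _ _ _), abs_one]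
  exact cp_le_one _ _ _

lemma pair_int (f : ℝ → ℝ) (p q : ℝ) (hpq : p ≤ q) (hf : IntervalIntegrable f volume p q)
    (h : ∀ t ∈ Set.Ioo p q, 1 ≤ f t + f (p + q - t)) : (q - p) / 2 ≤ ∫ t in p..q, f t := by
  have h1 : ∫ t in p..q, f (p + q - t) = ∫ t in p..q, f t := by
    rw [intervalIntegral.integral_comp_sub_left]; simp
  have hf' : IntervalIntegrable (fun t => f (p + q - t)) volume p q := by
    have := (hf.comp_sub_left (p + q)).symm
    simpa using this
  have h2 : ∫ t in p..q, (1:ℝ) ≤ ∫ t in p..q, (f t + f (p + q - t)) :=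
    intervalIntegral.integral_mono_on_of_le_Ioo hpq intervalIntegrable_const (hf.add hf') h
  rw [intervalIntegral.integral_add hf hf', h1] at h2
  simp at h2
  linarith

lemma piece (A B θ s : ℝ) (hA : 0 < A) (hB : 0 < B) (hθ : 0 < θ) (hθ2 : θ < π)
    (hs1 : θ - π / 2 ≤ s) (hs2 : s ≤ π / 2) (hs : A * cos s = B * cos (s - θ))
    (hAB : A ≤ 2 * B * cos θ) :
    (s - (θ - π / 2)) / 2 ≤
      ∫ t in (θ - π / 2)..s, cutProb (A * cos t) (B * cos (t - θ)) 0 := by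
  have hsin : 0 < sin θ := sin_pos_of_pos_of_lt_pi hθ hθ2
  have hs2' : s < π / 2 := by
    rcases hs2.lt_or_eq with h | h
    · exact h
    · rw [h, cos_pi_div_two, cos_pi_div_two_sub] at hs
      have := mul_pos hB hsin
      linarith
  have hcs : 0 < cos s := cos_pos_of_mem_Ioo ⟨by linarith, hs2'⟩
  have hcp : 0 ≤ cos (s + θ) := by
    have h1 : B * cos (s - θ) ≤ 2 * B * cos θ * cos s := by
      rw [← hs]; exact mul_le_mul_of_nonneg_right hAB hcs.le
    rw [cos_sub] at h1
    rw [cos_add]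
    have h2 : 0 ≤ B * (cos s * cos θ - sin s * sin θ) := by linarith
    exact nonneg_of_mul_nonneg_right h2 hB
  refine pair_int _ _ _ hs1 (cp_int _ _ (by fun_prop) (by fun_prop) _ _) ?_
  have key : ∀ t ∈ Set.Ioo (θ - π / 2) s, 0 < cos t ∧ cutProb (A * cos t) (B * cos (t - θ)) 0
      = (B * cos (t - θ)) / (A * cos t) := by
    intro t ht
    have hc : 0 < cos t := cos_pos_of_mem_Ioo ⟨by linarith [ht.1], by linarith [ht.2]⟩
    have hc' : 0 < cos (t - θ) := cos_pos_of_mem_Ioo ⟨by linarith [ht.1], by linarith [ht.2]⟩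
    refine ⟨hc, cp_eq (mul_pos hB hc') ?_⟩
    have h1 : 0 ≤ sin (s - t) := sin_nonneg_of_nonneg_of_le_pi (by linarith [ht.2])
      (by linarith [ht.1])
    have h2 : cos (s - θ) * cos t - cos (t - θ) * cos s = sin θ * sin (s - t) := by
      rw [cos_sub, cos_sub, sin_sub]; ring
    have h3 : 0 ≤ (A * cos t - B * cos (t - θ)) * cos s := by
      have : (A * cos t - B * cos (t - θ)) * cos s = B * (sin θ * sin (s - t)) := by
        rw [← h2]; linear_combination cos t * hs
      rw [this]; positivity
    have := nonneg_of_mul_nonneg_left h3 hcs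
    linarith
  intro t ht
  obtain ⟨t', ht'⟩ : ∃ t', t' = θ - π / 2 + s - t := ⟨_, rfl⟩
  rw [← ht']
  have htt : t' ∈ Set.Ioo (θ - π / 2) s := ⟨by linarith [ht.2], by linarith [ht.1]⟩
  obtain ⟨hc, e⟩ := key t ht
  obtain ⟨hc', e'⟩ := key t' htt
  simp only [e, e']
  have hS : sin (t + t') = - cos (s + θ) := by
    rw [ht', show t + (θ - π / 2 + s - t) = (s + θ) - π / 2 by ring, sin_sub_pi_div_two]
  have hprod : sin θ * cos s ≤ cos t * cos t' := by
    have h1 : cos (s - (θ - π/2)) ≤ cos |t - t'| := by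
      apply cos_le_cos_of_nonneg_of_le_pi (abs_nonneg _) (by linarith)
      rw [abs_le]; constructor <;> linarith [ht.1, ht.2]
    rw [cos_abs] at h1
    have h2 : cos (s + (θ - π/2)) = cos (t + t') := by congr 1; rw [ht']; ring
    have h3 : cos (θ - π / 2) = sin θ := cos_sub_pi_div_two θ
    rw [← h3]
    rw [cos_add, cos_add] at h2
    rw [cos_sub, cos_sub t] at h1
    linarith
  rw [div_add_div _ _ (by positivity) (by positivity), one_le_div (by positivity)]
  have hmain : 0 ≤ (B * cos (t - θ) * cos t' + B * cos (t' - θ) * cos t - A * cos t * cos t')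
      * cos s := by
    have : (B * cos (t - θ) * cos t' + B * cos (t' - θ) * cos t - A * cos t * cos t') * cos s
        = B * (cos (s + θ) * (cos t * cos t' - sin θ * cos s)) := by
      have hS' := hS
      rw [sin_add] at hS'
      have e1 : cos (t - θ) * cos t' + cos (t' - θ) * cos t
        = 2 * cos θ * (cos t * cos t') - sin θ * cos (s + θ) := by
        rw [cos_sub, cos_sub]; linear_combination sin θ * hS'
      have e2 : cos (s - θ) = 2 * cos θ * cos s - cos (s + θ) := by
        rw [cos_sub, cos_add]; ring
      rw [e2] at hs
      linear_combination B * cos s * e1 - cos t * cos t' * hs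
    rw [this]
    exact mul_nonneg hB.le (mul_nonneg hcp (by linarith))
  have := nonneg_of_mul_nonneg_left hmain hcs
  nlinarith [mul_nonneg hA.le this]

lemma core (A B θ α : ℝ) (hA : 0 < A) (hB : 0 < B) (hθ : 0 < θ) (hθ2 : θ < π)
    (hAB : A ≤ 2 * B * cos θ) (hBA : B ≤ 2 * A * cos θ) :
    (π - θ) / 2 ≤
      ∫ t in (0:ℝ)..π, cutProb (A * cos (t - α)) (B * cos (t - (α + θ))) 0 := by
  have hsin : 0 < sin θ := sin_pos_of_pos_of_lt_pi hθ hθ2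
  set G : ℝ → ℝ := fun t => cutProb (A * cos t) (B * cos (t - θ)) 0 with hG
  have hGi : ∀ p q, IntervalIntegrable G volume p q := fun p q =>
    cp_int _ _ (by fun_prop) (by fun_prop) _ _
  have hper : Function.Periodic G π := by
    intro t
    simp only [hG]
    rw [show t + π - θ = (t - θ) + π by ring, cos_add_pi, cos_add_pi, mul_neg, mul_neg, cp_neg]
  have e1 : ∫ t in (0:ℝ)..π, cutProb (A * cos (t - α)) (B * cos (t - (α + θ))) 0
      = ∫ t in (0:ℝ)..π, G (t - α) := by
    simp only [hG, sub_sub]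
  rw [e1, intervalIntegral.integral_comp_sub_right]
  have e2 : ∫ t in (0 - α)..(π - α), G t = ∫ t in (θ - π / 2)..(θ - π / 2 + π), G t := by
    have := hper.intervalIntegral_add_eq (0 - α) (θ - π / 2)
    rw [← this]; congr 1; ring
  rw [e2]
  obtain ⟨s, hs, hs0⟩ : ∃ s ∈ Set.Icc (θ - π / 2) (π / 2), A * cos s - B * cos (s - θ) = 0 := by
    have := intermediate_value_Icc' (f := fun s => A * cos s - B * cos (s - θ))
      (a := θ - π / 2) (b := π / 2) (by linarith) (by fun_prop)
    apply this
    constructor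
    · simp only [cos_pi_div_two, cos_pi_div_two_sub]
      have := mul_pos hB hsin
      linarith
    · rw [cos_sub_pi_div_two, show θ - π / 2 - θ = -(π / 2) by ring, cos_neg, cos_pi_div_two]
      have := mul_pos hA hsin
      linarith
  have p1 := piece A B θ s hA hB hθ hθ2 hs.1 hs.2 (by linarith) hAB
  have p2 := piece B A θ (θ - s) hB hA hθ hθ2 (by linarith [hs.2]) (by linarith [hs.1])
    (by rw [show θ - s - θ = -s by ring, cos_neg, ← cos_neg, neg_sub]; linarith) hBA
  have e3 : ∫ t in (θ - π / 2)..(θ - s), cutProb (B * cos t) (A * cos (t - θ)) 0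
      = ∫ t in s..(π / 2), G t := by
    have : ∫ t in (θ - π / 2)..(θ - s), G (θ - t) = ∫ t in s..(π / 2), G t := by
      rw [intervalIntegral.integral_comp_sub_left]; simp
    rw [← this]
    congr 1
    funext t
    simp only [hG]
    rw [cp_comm, show θ - t - θ = - t by ring, cos_neg, ← cos_neg (θ - t), neg_sub]
  rw [e3] at p2
  have p3 : 0 ≤ ∫ t in (π / 2)..(θ - π / 2 + π), G t :=
    intervalIntegral.integral_nonneg (by linarith) fun t _ => cp_nonneg _ _ _
  have a1 := intervalIntegral.integral_add_adjacent_intervals (hGi (θ - π / 2) s) (hGi s (π / 2))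
  have a2 := intervalIntegral.integral_add_adjacent_intervals (hGi (θ - π / 2) (π / 2))
    (hGi (π / 2) (θ - π / 2 + π))
  rw [← a2, ← a1]
  simp only [hG] at *
  linarith

lemma polar_s2 (a : EuclideanSpace ℝ (Fin 2)) :
    ∃ α, a 0 = ‖a‖ * cos α ∧ a 1 = ‖a‖ * sin α := by
  refine ⟨Complex.arg ⟨a 0, a 1⟩, ?_⟩
  have h : ‖a‖ = ‖(⟨a 0, a 1⟩ : ℂ)‖ := by
    rw [EuclideanSpace.norm_eq, Complex.norm_def, Complex.normSq_mk]
    simp [Fin.sum_univ_two, sq]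
  rw [h]
  exact ⟨(Complex.norm_mul_cos_arg ⟨a 0, a 1⟩).symm, (Complex.norm_mul_sin_arg ⟨a 0, a 1⟩).symm⟩

theorem stmt2 (v1 v2 v3 : EuclideanSpace ℝ (Fin 2))
    (hcol : ¬ Collinear ℝ ({v1, v2, v3} : Set (EuclideanSpace ℝ (Fin 2))))
    (h13 : ‖v1 - v3‖ ≤ ‖v2 - v3‖) (h23 : ‖v2 - v3‖ ≤ ‖v1 - v2‖)
    (θ₃ : ℝ) (hθ₃ : θ₃ = InnerProductGeometry.angle (v1 - v2) (v3 - v2)) :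
    survProb v1 v3 v2 ≥ (Real.pi - θ₃) / (2 * Real.pi) := by
  rw [EuclideanGeometry.collinear_iff_eq_or_eq_or_sin_eq_zero] at hcol
  push Not at hcol
  obtain ⟨n1, n3, hsin⟩ := hcol
  have hsin' : sin θ₃ ≠ 0 := by rw [hθ₃]; exact hsin
  have hA : 0 < ‖v1 - v2‖ := norm_pos_iff.2 (sub_ne_zero.2 n1)
  have hB : 0 < ‖v3 - v2‖ := norm_pos_iff.2 (sub_ne_zero.2 n3)
  have hθ : 0 < θ₃ := by
    refine lt_of_le_of_ne (hθ₃ ▸ InnerProductGeometry.angle_nonneg _ _) ?_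
    rintro h; rw [← h] at hsin'; simp at hsin'
  have hθ2 : θ₃ < π := by
    refine lt_of_le_of_ne (hθ₃ ▸ InnerProductGeometry.angle_le_pi _ _) ?_
    rintro h; rw [h] at hsin'; simp at hsin'
  have hcos := InnerProductGeometry.cos_angle_mul_norm_mul_norm (v1 - v2) (v3 - v2)
  rw [← hθ₃] at hcos
  have hn := norm_sub_sq_real (v1 - v2) (v3 - v2)
  rw [sub_sub_sub_cancel_right, ← hcos] at hn
  rw [norm_sub_rev v2 v3] at h13 h23
  obtain ⟨α, ha0, ha1⟩ := polar_s2 (v1 - v2)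
  obtain ⟨β, hb0, hb1⟩ := polar_s2 (v3 - v2)
  have hin : inner ℝ (v1 - v2) (v3 - v2) = (v1 - v2) 0 * (v3 - v2) 0 + (v1 - v2) 1 * (v3 - v2) 1 := by
    simp [PiLp.inner_apply, Fin.sum_univ_two]; ring
  rw [hin, ha0, ha1, hb0, hb1] at hcos
  set A := ‖v1 - v2‖
  set B := ‖v3 - v2‖
  have hsq1 : ‖v1 - v3‖ ^ 2 ≤ B ^ 2 := by gcongr
  have hsq2 : B ^ 2 ≤ A ^ 2 := by gcongr
  have hAB : A ≤ 2 * B * cos θ₃ := by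
    have : 0 ≤ A * (2 * B * cos θ₃ - A) := by linarith
    linarith [nonneg_of_mul_nonneg_right this hA]
  have hBA : B ≤ 2 * A * cos θ₃ := by
    have : 0 ≤ B * (2 * A * cos θ₃ - B) := by linarith
    linarith [nonneg_of_mul_nonneg_right this hB]
  have hc : cos θ₃ = cos (β - α) := by
    rw [cos_sub]
    have : A * B * (cos θ₃ - (cos β * cos α + sin β * sin α)) = 0 := by linear_combination hcos
    rcases mul_eq_zero.1 this with h | h
    · exact absurd h (mul_pos hA hB).ne'
    · linarith
  have hx : ∀ φ, proj v1 φ = proj v2 φ + A * cos (φ - α) := by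
    intro φ
    simp only [PiLp.sub_apply] at ha0 ha1
    unfold proj
    rw [cos_sub]
    linear_combination cos φ * ha0 + sin φ * ha1
  have hy : ∀ φ, proj v3 φ = proj v2 φ + B * cos (φ - β) := by
    intro φ
    simp only [PiLp.sub_apply] at hb0 hb1
    unfold proj
    rw [cos_sub]
    linear_combination cos φ * hb0 + sin φ * hb1
  have hI : (π - θ₃) / 2 ≤ ∫ φ in (0:ℝ)..π, cutProb (proj v1 φ) (proj v3 φ) (proj v2 φ) := by
    simp only [hx, hy, cp_shift]
    obtain ⟨k, hk⟩ := Real.cos_eq_cos_iff.1 hc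
    rcases hk with hk | hk
    · have := core A B θ₃ α hA hB hθ hθ2 hAB hBA
      refine this.trans_eq ?_
      congr 1; funext φ
      congr 2
      rw [show φ - (α + θ₃) = φ - β + k * (2 * π) by linarith, cos_add_int_mul_two_pi]
    · have := core B A θ₃ β hB hA hθ hθ2 hBA hAB
      refine this.trans_eq ?_
      congr 1; funext φ
      rw [cp_comm]
      congr 2
      rw [show φ - (β + θ₃) = φ - α - k * (2 * π) by linarith, cos_sub_int_mul_two_pi]
  unfold survProb
  have : (π - θ₃) / (2 * π) = 1 / π * ((π - θ₃) / 2) := by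
    field_simp
  rw [this]
  exact mul_le_mul_of_nonneg_left hI (by positivity)
end

section
/- For every real ε ∈ (0,1) and every simple graph G on vertex set {1,…,n} with n ≥ 5, there exist a dimension d ≤ n², unit vectors k_1, …, k_n ∈ ℝ^d, a bandwidth σ > 0 with 1/σ² = n·log(1/ε), and a real α > 0 such that exp(−‖k_u − k_v‖²/(2σ²)) = α for every edge (u,v) of G, and exp(−‖k_u − k_v‖²/(2σ²)) = α·ε for every pair of distinct non-adjacent vertices u, v. -/
open Matrix in
theorem gram_aux (n : ℕ) (hn : 0 < n) (A : Fin n → Fin n → ℝ) (hs : ∀ i j, A i j = A j i)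
    (hA : ∀ i j, A i j = 0 ∨ A i j = 1) :
    ∃ k : Fin n → EuclideanSpace ℝ (Fin n), ∀ u v, inner ℝ (k u) (k v) =
      (if u = v then 1 else 0) + A u v / n := by
  have hn' : (0 : ℝ) < n := by exact_mod_cast hn
  let M : Matrix (Fin n) (Fin n) ℝ := Matrix.of fun u v => (if u = v then 1 else 0) + A u v / n
  have hM : M.PosSemidef := by
    refine Matrix.PosSemidef.of_dotProduct_mulVec_nonneg ?_ ?_
    · ext i j
      simp [M, hs i j, eq_comm]
    · intro x
      have h : star x ⬝ᵥ (M *ᵥ x) =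
          ∑ i, ∑ j, ((x i ^ 2 + x j ^ 2) / 2 + A i j * (x i * x j)) / n := by
        have h1 : ∑ i : Fin n, ∑ j : Fin n, ((x i ^ 2 + x j ^ 2) / 2) / (n : ℝ) =
            ∑ i, x i ^ 2 := by
          simp only [add_div, Finset.sum_add_distrib, Finset.sum_const, Finset.card_univ,
            Fintype.card_fin, nsmul_eq_mul, ← Finset.sum_div, ← Finset.mul_sum]
          field_simp
          ring
        simp only [add_div _ _ (n : ℝ)] at h1 ⊢
        simp only [Finset.sum_add_distrib] at h1 ⊢
        rw [h1]
        simp only [dotProduct, mulVec, M, Matrix.of_apply, add_mul, Finset.sum_add_distrib, mul_add,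
          Finset.mul_sum]
        congr 1
        · simp [pow_two]
        · refine Finset.sum_congr rfl fun i _ => Finset.sum_congr rfl fun j _ => ?_
          simp
          ring
      rw [h]
      refine Finset.sum_nonneg fun i _ => Finset.sum_nonneg fun j _ => ?_
      refine div_nonneg ?_ hn'.le
      rcases hA i j with h | h <;> rw [h]
      · nlinarith [sq_nonneg (x i), sq_nonneg (x j)]
      · nlinarith [sq_nonneg (x i + x j)]
  obtain ⟨B, hB⟩ : ∃ B : Matrix (Fin n) (Fin n) ℝ, M = Bᴴ * B := by
    open scoped MatrixOrder in
    exact CStarAlgebra.nonneg_iff_eq_star_mul_self.mp hM.nonneg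
  refine ⟨fun u => WithLp.toLp 2 fun i => B i u, fun u v => ?_⟩
  have := congrFun (congrFun hB u) v
  simp only [M, Matrix.of_apply] at this
  rw [this]
  simp [Matrix.mul_apply, PiLp.inner_apply, mul_comm]

theorem stmt3 (ε : ℝ) (hε0 : 0 < ε) (hε1 : ε < 1) (n : ℕ) (hn : 5 ≤ n)
    (G : SimpleGraph (Fin n)) :
    ∃ d : ℕ, d ≤ n ^ 2 ∧
      ∃ (k : Fin n → EuclideanSpace ℝ (Fin d)) (σ α : ℝ),
        0 < σ ∧ 1 / σ ^ 2 = n * Real.log (1 / ε) ∧ 0 < α ∧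
        (∀ u, ‖k u‖ = 1) ∧
        (∀ u v, G.Adj u v →
          Real.exp (-‖k u - k v‖ ^ 2 / (2 * σ ^ 2)) = α) ∧
        (∀ u v, u ≠ v → ¬ G.Adj u v →
          Real.exp (-‖k u - k v‖ ^ 2 / (2 * σ ^ 2)) = α * ε) := by
  classical
  have hn' : (0 : ℝ) < n := by
    have : 0 < n := by omega
    exact_mod_cast this
  obtain ⟨k, hk⟩ := gram_aux n (by omega) (fun i j => if G.Adj i j then 1 else 0)
    (fun i j => by simp [G.adj_comm]) (fun i j => by by_cases h : G.Adj i j <;> simp [h])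
  have hL : 0 < Real.log (1 / ε) := Real.log_pos (by rw [lt_div_iff₀ hε0]; linarith)
  have hε : ε = Real.exp (-Real.log (1 / ε)) := by
    rw [one_div, Real.log_inv, neg_neg, Real.exp_log hε0]
  set L := Real.log (1 / ε)
  have hnL : 0 < n * L := mul_pos hn' hL
  have hnorm : ∀ u, ‖k u‖ = 1 := fun u => by
    have h := hk u u
    rw [real_inner_self_eq_norm_sq] at h
    simp at h
    rcases h with h | h
    · exact h
    · linarith [norm_nonneg (k u)]
  have hσ : (1 / √(n * L)) ^ 2 = 1 / (n * L) := by
    rw [div_pow, Real.sq_sqrt hnL.le, one_pow]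
  refine ⟨n, by nlinarith, k, 1 / √(n * L), Real.exp (-((n - 1) * L)), by positivity, ?_,
    Real.exp_pos _, hnorm, ?_, ?_⟩
  · rw [hσ, one_div_one_div]
  · intro u v h
    rw [hσ, norm_sub_sq_real, hk, hnorm, hnorm]
    simp only [h, h.ne, if_true, if_false]
    congr 1
    field_simp
    ring
  · intro u v hne h
    rw [hσ, norm_sub_sq_real, hk, hnorm, hnorm]
    simp only [h, hne, if_false]
    rw [hε, ← Real.exp_add]
    congr 1
    field_simp
    ring
end

section
/- For every simple graph G on vertex set {1,…,n} with n ≥ 5, there exist unit vectors k_1, …, k_n ∈ ℝ^{n²} such that the inner product ⟨k_u, k_v⟩ equals 1/n whenever (u,v) is an edge of G, and equals 0 whenever u ≠ v and (u,v) is not an edge of G. -/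
open scoped RealInnerProductSpace

open Classical in
theorem stmt4_aux (n : ℕ) (hn : 5 ≤ n) (G : SimpleGraph (Fin n)) :
    ∃ f : Fin n → Fin n → Fin n → ℝ,
      (∀ u, ∑ a, ∑ b, f u a b * f u a b = 1) ∧
      (∀ u v, u ≠ v → ∑ a, ∑ b, f u a b * f v a b = if G.Adj u v then 1 / (n : ℝ) else 0) := by
  have hn0 : (0 : ℝ) < n := by exact_mod_cast (by omega : 0 < n)
  obtain ⟨c, hc⟩ : ∃ c : ℝ, c * c = 1 / (2 * n) :=
    ⟨√(1 / (2 * n)), Real.mul_self_sqrt (by positivity)⟩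
  have hd : ∀ u, ∃ d : ℝ, d * d = 1 - 2 * (c * c) * ∑ b, (if G.Adj u b then (1 : ℝ) else 0) := by
    intro u
    refine ⟨√(1 - 2 * (c * c) * ∑ b, (if G.Adj u b then (1 : ℝ) else 0)), Real.mul_self_sqrt ?_⟩
    have h1 : ∑ b, (if G.Adj u b then (1 : ℝ) else 0) ≤ ∑ b : Fin n, (1 : ℝ) :=
      Finset.sum_le_sum fun b _ => by split_ifs <;> norm_num
    have h2 : ∑ b : Fin n, (1 : ℝ) = n := by simp
    rw [h2] at h1
    have h3 : 2 * (c * c) * ∑ b, (if G.Adj u b then (1 : ℝ) else 0) ≤ 2 * (c * c) * n :=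
      mul_le_mul_of_nonneg_left h1 (by nlinarith [mul_self_nonneg c])
    have h4 : 2 * (c * c) * n = 1 := by rw [hc]; field_simp
    linarith
  choose d hd using hd
  refine ⟨fun u a b => if a = b then (if u = a then d u else 0) else
    if G.Adj a b ∧ (u = a ∨ u = b) then c else 0, ?_, ?_⟩
  · intro u
    have key : ∀ a b : Fin n, (if a = b then (if u = a then d u else 0) else
        if G.Adj a b ∧ (u = a ∨ u = b) then c else 0) *
        (if a = b then (if u = a then d u else 0) else
        if G.Adj a b ∧ (u = a ∨ u = b) then c else 0) =
        (if u = a then (if u = b then d u * d u else 0) else 0)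
        + (if u = a then c * c * (if G.Adj u b then (1 : ℝ) else 0) else 0)
        + (if u = b then c * c * (if G.Adj u a then (1 : ℝ) else 0) else 0) := by
      intro a b
      by_cases hab : a = b
      · subst hab
        by_cases h : u = a <;> simp [h]
      · by_cases h : u = a
        · subst h
          simp [hab]
          exact fun h1 h2 => absurd h2 h1
        · by_cases h' : u = b
          · subst h'
            simp [h, Ne.symm, eq_comm, G.adj_comm a u]
            exact fun h1 h2 => absurd h2 h1
          · simp [h, h', hab]
    simp only [key, Finset.sum_add_distrib]
    rw [Finset.sum_comm (f := fun a b => if u = b then _ else _)]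
    have : ∀ (g : Fin n → ℝ), ∑ a, ∑ b, (if u = a then g b else 0) = ∑ b, g b := by
      intro g
      rw [Finset.sum_comm]; simp
    simp only [this]
    rw [← Finset.mul_sum]
    simp only [Finset.sum_ite_eq, Finset.mem_univ, if_true, hd]
    ring
  · intro u v huv
    have key : ∀ a b : Fin n, (if a = b then (if u = a then d u else 0) else
        if G.Adj a b ∧ (u = a ∨ u = b) then c else 0) *
        (if a = b then (if v = a then d v else 0) else
        if G.Adj a b ∧ (v = a ∨ v = b) then c else 0) =
        (if u = a then (if v = b then (if G.Adj u v then c * c else 0) else 0) else 0)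
        + (if v = a then (if u = b then (if G.Adj u v then c * c else 0) else 0) else 0) := by
      intro a b
      have := G.adj_comm u v
      grind
    simp only [key, Finset.sum_add_distrib]
    have : ∀ (w : Fin n) (g : Fin n → ℝ), ∑ a, ∑ b, (if w = a then g b else 0) = ∑ b, g b := by
      intro w g
      rw [Finset.sum_comm]; simp
    simp only [this]
    simp only [Finset.sum_ite_eq, Finset.mem_univ, if_true, hc]
    split_ifs
    · field_simp; norm_num
    · simp

theorem stmt4 (n : ℕ) (hn : 5 ≤ n) (G : SimpleGraph (Fin n)) :
    ∃ k : Fin n → EuclideanSpace ℝ (Fin (n ^ 2)),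
      (∀ u, ‖k u‖ = 1) ∧
      (∀ u v, G.Adj u v → ⟪k u, k v⟫ = 1 / (n : ℝ)) ∧
      (∀ u v, u ≠ v → ¬ G.Adj u v → ⟪k u, k v⟫ = (0 : ℝ)) := by
  classical
  obtain ⟨f, h1, h2⟩ := stmt4_aux n hn G
  let e : Fin n × Fin n ≃ Fin (n ^ 2) := finProdFinEquiv.trans (finCongr (sq n).symm)
  let k : Fin n → EuclideanSpace ℝ (Fin (n ^ 2)) :=
    fun u => WithLp.toLp 2 fun i => f u (e.symm i).1 (e.symm i).2
  have hk : ∀ u v, ⟪k u, k v⟫ = ∑ a, ∑ b, f u a b * f v a b := by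
    intro u v
    rw [← Fintype.sum_prod_type' (f := fun a b => f u a b * f v a b), ← e.symm.sum_comp,
      PiLp.inner_apply]
    refine Finset.sum_congr rfl fun i _ => ?_
    simp [k, mul_comm]
  refine ⟨k, fun u => ?_, fun u v h => ?_, fun u v huv h => ?_⟩
  · have h := real_inner_self_eq_norm_sq (k u)
    rw [hk, h1] at h
    have := norm_nonneg (k u)
    nlinarith
  · rw [hk, h2 u v h.ne]; simp [h]
  · rw [hk, h2 u v huv]; simp [h]
end

section
/- Let a ≤ b ≤ c be real numbers with a < c, and let g : ℝ → ℝ be a monotone non-increasing function. Then g(c − b)·(b − a) + g(b − a)·(c − b) ≥ ((g(b − a) + g(c − b))/2)·(c − a). (Equivalently, for a uniformly random cut point r ∈ [a, c], the expected scored weight for the triple a ≤ b ≤ c under the Random Cut algorithm — which scores g(c − b) if r ∈ [a, b] and g(b − a) if r ∈ [b, c] — is at least half of g(b − a) + g(c − b).) -/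
theorem stmt7 (a b c : ℝ) (hab : a ≤ b) (hbc : b ≤ c) (hac : a < c)
    (g : ℝ → ℝ) (hg : Antitone g) :
    g (c - b) * (b - a) + g (b - a) * (c - b) ≥ ((g (b - a) + g (c - b)) / 2) * (c - a) := by
  rcases le_total (b - a) (c - b) with h | h
  · have h1 := hg h
    nlinarith [mul_nonneg (sub_nonneg.2 h) (sub_nonneg.2 h1)]
  · have h1 := hg h
    nlinarith [mul_nonneg (sub_nonneg.2 h) (sub_nonneg.2 h1)]
end

section
/- Let θ₁, θ₂, θ₃ be positive reals with θ₁ + θ₂ + θ₃ = π and θ₃ ≤ θ₂, and let θ ∈ (0, θ₁]. Then sin(θ₁ + θ₃)/sin(θ + θ₃) ≥ sin(θ₁ + θ₂)/sin(θ + θ₂); equivalently, (sin θ / sin(θ + θ₃))·(sin(θ₁ + θ₃)/sin θ₁) ≥ (sin θ / sin(θ + θ₂))·(sin(θ₁ + θ₂)/sin θ₁). -/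
theorem stmt9 (θ₁ θ₂ θ₃ θ : ℝ)
    (h1 : 0 < θ₁) (h2 : 0 < θ₂) (h3 : 0 < θ₃)
    (hsum : θ₁ + θ₂ + θ₃ = Real.pi) (h32 : θ₃ ≤ θ₂)
    (hθ0 : 0 < θ) (hθ1 : θ ≤ θ₁) :
    Real.sin (θ₁ + θ₃) / Real.sin (θ + θ₃) ≥ Real.sin (θ₁ + θ₂) / Real.sin (θ + θ₂) ∧
    (Real.sin θ / Real.sin (θ + θ₃)) * (Real.sin (θ₁ + θ₃) / Real.sin θ₁) ≥
      (Real.sin θ / Real.sin (θ + θ₂)) * (Real.sin (θ₁ + θ₂) / Real.sin θ₁) := by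
  have pa : 0 < Real.sin (θ + θ₃) := Real.sin_pos_of_pos_of_lt_pi (by linarith) (by linarith)
  have pb : 0 < Real.sin (θ + θ₂) := Real.sin_pos_of_pos_of_lt_pi (by linarith) (by linarith)
  have p1 : 0 < Real.sin θ₁ := Real.sin_pos_of_pos_of_lt_pi (by linarith) (by linarith)
  have p : 0 < Real.sin θ := Real.sin_pos_of_pos_of_lt_pi (by linarith) (by linarith)
  have d1 : 0 ≤ Real.sin (θ₁ - θ) := Real.sin_nonneg_of_nonneg_of_le_pi (by linarith) (by linarith)
  have d2 : 0 ≤ Real.sin (θ₂ - θ₃) := Real.sin_nonneg_of_nonneg_of_le_pi (by linarith) (by linarith)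
  have key : Real.sin (θ₁ + θ₃) * Real.sin (θ + θ₂) - Real.sin (θ₁ + θ₂) * Real.sin (θ + θ₃)
      = Real.sin (θ₁ - θ) * Real.sin (θ₂ - θ₃) := by
    simp only [Real.sin_add, Real.sin_sub]
    ring
  have main : Real.sin (θ₁ + θ₂) / Real.sin (θ + θ₂) ≤ Real.sin (θ₁ + θ₃) / Real.sin (θ + θ₃) := by
    rw [div_le_div_iff₀ pb pa]
    have := mul_nonneg d1 d2
    linarith
  refine ⟨main, ?_⟩
  have h := mul_le_mul_of_nonneg_left main (div_pos p p1).le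
  calc (Real.sin θ / Real.sin (θ + θ₂)) * (Real.sin (θ₁ + θ₂) / Real.sin θ₁)
      = Real.sin θ / Real.sin θ₁ * (Real.sin (θ₁ + θ₂) / Real.sin (θ + θ₂)) := by ring
    _ ≤ _ := h
    _ = _ := by ring
end

section
/- Let θ₁, θ₂, θ₃ be positive reals with θ₁ + θ₂ + θ₃ = π and θ₃ ≤ θ₂. Then (1/θ₁)·∫₀^{θ₁} (sin θ · sin(θ₁ + θ₃)) / (sin(θ + θ₃) · sin θ₁) dθ ≥ (1/θ₁)·∫₀^{θ₁} (sin θ · sin(θ₁ + θ₂)) / (sin(θ + θ₂) · sin θ₁) dθ. -/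
open MeasureTheory

theorem stmt10 (θ₁ θ₂ θ₃ : ℝ)
    (h1 : 0 < θ₁) (h2 : 0 < θ₂) (h3 : 0 < θ₃)
    (hsum : θ₁ + θ₂ + θ₃ = Real.pi) (h32 : θ₃ ≤ θ₂) :
    (1 / θ₁) * ∫ θ in (0:ℝ)..θ₁,
        Real.sin θ * Real.sin (θ₁ + θ₃) / (Real.sin (θ + θ₃) * Real.sin θ₁)
      ≥ (1 / θ₁) * ∫ θ in (0:ℝ)..θ₁,
          Real.sin θ * Real.sin (θ₁ + θ₂) / (Real.sin (θ + θ₂) * Real.sin θ₁) := by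
  have hs1 : 0 < Real.sin θ₁ := Real.sin_pos_of_pos_of_lt_pi h1 (by linarith)
  have hpos : ∀ c, 0 < c → θ₁ + c < Real.pi → ∀ θ ∈ Set.Icc 0 θ₁, 0 < Real.sin (θ + c) := by
    intro c hc hc' θ hθ
    exact Real.sin_pos_of_pos_of_lt_pi (by linarith [hθ.1]) (by linarith [hθ.2])
  have hint : ∀ c, 0 < c → θ₁ + c < Real.pi → IntervalIntegrable
      (fun θ => Real.sin θ * Real.sin (θ₁ + c) / (Real.sin (θ + c) * Real.sin θ₁))
      volume 0 θ₁ := by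
    intro c hc hc'
    apply ContinuousOn.intervalIntegrable
    rw [Set.uIcc_of_le h1.le]
    apply ContinuousOn.div (by fun_prop) (by fun_prop)
    intro θ hθ
    exact (mul_pos (hpos c hc hc' θ hθ) hs1).ne'
  have e3 : Real.sin (θ₁ + θ₃) = Real.sin θ₂ := by
    rw [← Real.sin_pi_sub]; congr 1; linarith
  have e2 : Real.sin (θ₁ + θ₂) = Real.sin θ₃ := by
    rw [← Real.sin_pi_sub]; congr 1; linarith
  apply mul_le_mul_of_nonneg_left _ (by positivity)
  apply intervalIntegral.integral_mono_on h1.le (hint θ₂ h2 (by linarith))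
    (hint θ₃ h3 (by linarith))
  intro θ hθ
  have p2 := hpos θ₂ h2 (by linarith) θ hθ
  have p3 := hpos θ₃ h3 (by linarith) θ hθ
  have hs : 0 ≤ Real.sin θ := Real.sin_nonneg_of_nonneg_of_le_pi hθ.1 (by linarith [hθ.2])
  have key : Real.sin θ₃ * Real.sin (θ + θ₃) ≤ Real.sin θ₂ * Real.sin (θ + θ₂) := by
    have hA : 0 ≤ Real.sin (θ + θ₂ + θ₃) :=
      Real.sin_nonneg_of_nonneg_of_le_pi (by linarith [hθ.1]) (by linarith [hθ.2])
    have hB : 0 ≤ Real.sin (θ₂ - θ₃) :=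
      Real.sin_nonneg_of_nonneg_of_le_pi (by linarith) (by linarith)
    have : Real.sin θ₂ * Real.sin (θ + θ₂) - Real.sin θ₃ * Real.sin (θ + θ₃)
        = Real.sin (θ + θ₂ + θ₃) * Real.sin (θ₂ - θ₃) := by
      simp only [Real.sin_add, Real.sin_sub, Real.cos_add]
      have q2 := Real.sin_sq_add_cos_sq θ₂
      have q3 := Real.sin_sq_add_cos_sq θ₃
      have r2 : Real.cos θ₂ ^ 2 = 1 - Real.sin θ₂ ^ 2 := by linarith
      have r3 : Real.cos θ₃ ^ 2 = 1 - Real.sin θ₃ ^ 2 := by linarith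
      ring_nf
      simp only [r2, r3]
      ring
    nlinarith [mul_nonneg hA hB]
  rw [e2, e3, div_le_div_iff₀ (mul_pos p2 hs1) (mul_pos p3 hs1)]
  have := mul_le_mul_of_nonneg_left key (mul_nonneg hs hs1.le)
  nlinarith [this]
end

section
/- Fix σ > 0, and for Δ > 0 set w₁ = exp(−Δ²/(2σ²)) and w₄ = exp(−(2Δ)²/(2σ²)) (the Gaussian kernel weights of adjacent and distance-2Δ pairs among the equally spaced points 0, Δ, 2Δ, 3Δ). Then the ratio (3·w₁ + w₄)/(4·w₁) — the value of Dasgupta-type objective F⁺ on the tree produced by average-linkage divided by its value on the balanced tree {{0,Δ},{2Δ,3Δ}} — tends to 3/4 as Δ → ∞. Consequently, for every ε > 0 there exists Δ₀ such that for all Δ ≥ Δ₀, 3·exp(−Δ²/(2σ²)) + exp(−2Δ²/σ²) ≤ (3/4 + ε)·4·exp(−Δ²/(2σ²)). -/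
open Filter

theorem stmt12 (σ : ℝ) (hσ : 0 < σ) :
    Tendsto (fun Δ : ℝ =>
        (3 * Real.exp (-Δ ^ 2 / (2 * σ ^ 2)) + Real.exp (-(2 * Δ) ^ 2 / (2 * σ ^ 2))) /
          (4 * Real.exp (-Δ ^ 2 / (2 * σ ^ 2))))
      atTop (nhds (3 / 4)) ∧
    ∀ ε > (0 : ℝ), ∃ Δ₀ : ℝ, ∀ Δ ≥ Δ₀,
      3 * Real.exp (-Δ ^ 2 / (2 * σ ^ 2)) + Real.exp (-2 * Δ ^ 2 / σ ^ 2) ≤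
        (3 / 4 + ε) * (4 * Real.exp (-Δ ^ 2 / (2 * σ ^ 2))) := by
  have hlim : Tendsto (fun Δ : ℝ => 3 / 4 + 1 / 4 * Real.exp (-(3 / (2 * σ ^ 2) * Δ ^ 2)))
      atTop (nhds (3 / 4)) := by
    have h1 : Tendsto (fun Δ : ℝ => 3 / (2 * σ ^ 2) * Δ ^ 2) atTop atTop :=
      (tendsto_pow_atTop (two_ne_zero)).const_mul_atTop (by positivity)
    have h2 := Real.tendsto_exp_neg_atTop_nhds_zero.comp h1
    have h3 := (h2.const_mul (1 / 4 : ℝ)).const_add (3 / 4 : ℝ)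
    simpa using h3
  have hfun : (fun Δ : ℝ =>
        (3 * Real.exp (-Δ ^ 2 / (2 * σ ^ 2)) + Real.exp (-(2 * Δ) ^ 2 / (2 * σ ^ 2))) /
          (4 * Real.exp (-Δ ^ 2 / (2 * σ ^ 2)))) =
      fun Δ : ℝ => 3 / 4 + 1 / 4 * Real.exp (-(3 / (2 * σ ^ 2) * Δ ^ 2)) := by
    funext Δ
    have h : Real.exp (-(2 * Δ) ^ 2 / (2 * σ ^ 2)) =
        Real.exp (-(3 / (2 * σ ^ 2) * Δ ^ 2)) * Real.exp (-Δ ^ 2 / (2 * σ ^ 2)) := by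
      rw [← Real.exp_add]
      congr 1
      field_simp
      ring
    rw [h, div_eq_iff (by positivity)]
    ring
  have hT := hlim
  rw [← hfun] at hT
  refine ⟨hT, fun ε hε => ?_⟩
  have hev := hT.eventually (ge_mem_nhds (show (3 / 4 : ℝ) < 3 / 4 + ε by linarith))
  obtain ⟨Δ₀, h0⟩ := eventually_atTop.1 hev
  refine ⟨Δ₀, fun Δ hΔ => ?_⟩
  have h := h0 Δ hΔ
  rw [div_le_iff₀ (by positivity)] at h
  have e : -2 * Δ ^ 2 / σ ^ 2 = -(2 * Δ) ^ 2 / (2 * σ ^ 2) := by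
    field_simp
  rw [e]
  exact h
end

section
/- Let n ≥ 1, let x₁ ≤ x₂ ≤ … ≤ xₙ be real numbers, and let g : ℝ → ℝ be a monotone non-increasing function with g ≥ 0. Then for every spanning tree T of the complete graph on {1,…,n}, the total weight Σ_{(u,v) edge of T} g(|x_u − x_v|) is at most Σ_{i=1}^{n−1} g(x_{i+1} − x_i). In other words, the path x₁ − x₂ − … − xₙ is a maximum-weight spanning tree under any monotone distance-based similarity measure on the line (and hence single-linkage merges exactly the consecutive intervals, in increasing order of length). -/
/-- Consecutive steps give reachability. -/
lemma reach_aux {n : ℕ} (G : SimpleGraph (Fin (n + 1))) (u : Fin (n + 1)) (v : Fin (n + 1)) :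
    u ≤ v → (∀ i : Fin n, u ≤ i.castSucc → i.succ ≤ v → G.Adj i.castSucc i.succ) →
    G.Reachable u v := by
  induction v using Fin.induction with
  | zero =>
    intro h _
    have : u = 0 := le_antisymm h (Fin.zero_le _)
    rw [this]
  | succ i ih =>
    intro h H
    rcases h.eq_or_lt with h | h
    · rw [h]
    · have h' : u ≤ i.castSucc := Fin.le_castSucc_iff.2 h
      exact (ih h' (fun j h1 h2 => H j h1 (h2.trans i.castSucc_lt_succ.le))).trans
        (H i h' le_rfl).reachable

/-- The edge `e` crosses the gap `i`. -/
def CrossGap {n : ℕ} (e : Sym2 (Fin (n + 1))) (i : Fin n) : Prop :=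
  ∃ u v, e = s(u, v) ∧ u ≤ i.castSucc ∧ i.succ ≤ v

open Classical in
lemma hall_aux {n : ℕ} (T : SimpleGraph (Fin (n + 1))) (hT : T.IsTree)
    (S : Finset (Sym2 (Fin (n + 1)))) (hS : S ⊆ T.edgeFinset) :
    S.card ≤ (Finset.univ.filter fun i : Fin n => ∃ e ∈ S, CrossGap e i).card := by
  set N := Finset.univ.filter fun i : Fin n => ∃ e ∈ S, CrossGap e i with hN
  let F : Finset (Sym2 (Fin (n + 1))) :=
    (T.edgeFinset \ S) ∪ N.image (fun i => s(i.castSucc, i.succ))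
  let G := SimpleGraph.fromEdgeSet (F : Set (Sym2 (Fin (n + 1))))
  have hstep : ∀ i ∈ N, G.Adj i.castSucc i.succ := by
    intro i hi
    refine (SimpleGraph.fromEdgeSet_adj _).2 ⟨?_, i.castSucc_lt_succ.ne⟩
    exact Finset.mem_coe.2 (Finset.mem_union_right _ (Finset.mem_image_of_mem _ hi))
  have hreach : ∀ u v, u ≤ v → T.Adj u v → G.Reachable u v := by
    intro u v huv h
    by_cases hs : s(u, v) ∈ S
    · refine reach_aux G u v huv fun i h1 h2 => hstep i ?_
      rw [hN, Finset.mem_filter]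
      exact ⟨Finset.mem_univ _, _, hs, u, v, rfl, h1, h2⟩
    · apply SimpleGraph.Adj.reachable
      refine (SimpleGraph.fromEdgeSet_adj _).2 ⟨?_, h.ne⟩
      refine Finset.mem_coe.2 (Finset.mem_union_left _ (Finset.mem_sdiff.2 ⟨?_, hs⟩))
      simpa using h
  have hreach' : ∀ u v, T.Adj u v → G.Reachable u v := by
    intro u v h
    rcases le_total u v with h' | h'
    · exact hreach u v h' h
    · exact (hreach v u h' h.symm).symm
  have hwalk : ∀ u v, T.Walk u v → G.Reachable u v := by
    intro u v p
    induction p with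
    | nil => exact SimpleGraph.Reachable.refl _
    | cons h _ ih => exact (hreach' _ _ h).trans ih
  have hconn : G.Connected := by
    have : Nonempty (Fin (n + 1)) := ⟨0⟩
    refine SimpleGraph.Connected.mk fun u v => ?_
    obtain ⟨p⟩ := hT.connected.preconnected u v
    exact hwalk u v p
  have h1 := hconn.card_vert_le_card_edgeSet_add_one
  have h2 := hT.card_edgeFinset
  have h3 : Nat.card G.edgeSet ≤ F.card := by
    rw [← Set.ncard_coe_finset, ← Nat.card_coe_set_eq]
    apply Nat.card_mono (Finset.finite_toSet F)
    rw [SimpleGraph.edgeSet_fromEdgeSet]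
    exact Set.sdiff_subset
  have h4 : F.card ≤ (T.edgeFinset.card - S.card) + N.card := by
    refine (Finset.card_union_le _ _).trans ?_
    rw [Finset.card_sdiff_of_subset hS]
    exact Nat.add_le_add_left Finset.card_image_le _
  have h5 := Finset.card_le_card hS
  rw [Nat.card_eq_fintype_card (α := Fin (n + 1))] at h1
  omega


theorem stmt15 (n : ℕ) (x : Fin (n + 1) → ℝ) (hx : Monotone x)
    (g : ℝ → ℝ) (hg : Antitone g) (hg0 : ∀ t, 0 ≤ g t)
    (T : SimpleGraph (Fin (n + 1))) [DecidableRel T.Adj] (hT : T.IsTree) :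
    ∑ e ∈ T.edgeFinset,
        Sym2.lift ⟨fun u v => g |x u - x v|,
          fun u v => by simp only [abs_sub_comm (x u) (x v)]⟩ e
      ≤ ∑ i : Fin n, g (x i.succ - x i.castSucc) := by

  classical
  obtain ⟨f, hf, hfc⟩ := (Fintype.all_card_le_filter_rel_iff_exists_injective
    (fun (e : T.edgeFinset) (i : Fin n) => CrossGap e.1 i)).1 (by
      intro A
      have := hall_aux T hT (A.map (Function.Embedding.subtype _)) (by
        intro e he
        obtain ⟨a, _, rfl⟩ := Finset.mem_map.1 he
        have h := a.2
        refine (@SimpleGraph.mem_edgeFinset _ _ _ (_)).2 ?_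
        rw [SimpleGraph.mem_edgeFinset] at h
        exact h)
      rw [Finset.card_map] at this
      refine this.trans (Finset.card_le_card ?_)
      intro i hi
      obtain ⟨_, e, he, hc⟩ := Finset.mem_filter.1 hi
      obtain ⟨a, ha, rfl⟩ := Finset.mem_map.1 he
      exact Finset.mem_filter.2 ⟨Finset.mem_univ _, a, ha, hc⟩)
  rw [← Finset.sum_coe_sort T.edgeFinset]
  calc _ ≤ ∑ e : T.edgeFinset, g (x (f e).succ - x (f e).castSucc) := by
        refine Finset.sum_le_sum fun e _ => ?_
        obtain ⟨u, v, he, h1, h2⟩ := hfc e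
        rw [he, Sym2.lift_mk]
        apply hg
        rw [abs_sub_comm]
        exact (sub_le_sub (hx h2) (hx h1)).trans (le_abs_self _)
    _ = ∑ i ∈ Finset.univ.image f, g (x i.succ - x i.castSucc) := by
        rw [Finset.sum_image fun a _ b _ h => hf h]
    _ ≤ _ := Finset.sum_le_sum_of_subset_of_nonneg (Finset.subset_univ _) fun _ _ _ => hg0 _
end
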